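/- arXiv:1402.4694 — 2 statements merged into one kernel-verified Lean document; each statement's English description precedes it below -/
import Mathlib

section
/- Let α ∈ (0,π), γ ∈ [0,π/2], B = (sin γ·cos(α/2), sin γ·sin(α/2), cos γ), and assume α·( 1/√3 + (√3/2)·sin²γ ) < Θ₀. Then for every τ* ∈ ℝ with s(B;α,τ*) = inf_{τ∈ℝ} s(B;α,τ), one has s(B;α,τ*) < s_ess(B;α,τ*); consequently s(B;α,τ*) is a discrete eigenvalue of the Neumann realization of the magnetic Schrödinger operator on the sector at τ = τ*. -/
open Real MeasureTheory Set Filter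

noncomputable section

namespace MagWedge

/-- The infinite sector `S_α := {(x₁,x₂) : |x₂| ≤ x₁·tan(α/2)}`. -/
def sector (α : ℝ) : Set (ℝ × ℝ) :=
  {x | |x.2| ≤ x.1 * Real.tan (α / 2)}

/-- The infinite wedge `W_α := S_α × ℝ` (coordinates `(x₁, x₂, x₃)`). -/
def wedge (α : ℝ) : Set (ℝ × ℝ × ℝ) :=
  {x | |x.2.1| ≤ x.1 * Real.tan (α / 2)}

/-- The upper half-plane `Hp^up := {x₂ < x₁·tan(α/2)}`. -/
def hpUp (α : ℝ) : Set (ℝ × ℝ) :=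
  {x | x.2 < x.1 * Real.tan (α / 2)}

/-- The lower half-plane `Hp^low := {x₂ > −x₁·tan(α/2)}`. -/
def hpLow (α : ℝ) : Set (ℝ × ℝ) :=
  {x | -(x.1 * Real.tan (α / 2)) < x.2}

/-- The magnetic/electric energy of `u` on a planar domain `Ω`, for magnetic field
`(b₁,b₂,b₃)` (gauge `A̲ = (−x₂ b₃, 0)`) and Fourier parameter `τ`. -/
def energy2D (Ω : Set (ℝ × ℝ)) (b1 b2 b3 τ : ℝ) (u : ℝ × ℝ → ℂ) : ℝ :=
  ∫ x in Ω,
    ‖(-Complex.I) * fderiv ℝ u x (1, 0) + ((x.2 * b3 : ℝ) : ℂ) * u x‖ ^ 2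
      + ‖fderiv ℝ u x (0, 1)‖ ^ 2
      + (x.1 * b2 - x.2 * b1 - τ) ^ 2 * ‖u x‖ ^ 2

/-- The squared `L²`-norm of `u` on a planar domain `Ω`. -/
def norm2D (Ω : Set (ℝ × ℝ)) (u : ℝ × ℝ → ℂ) : ℝ := ∫ x in Ω, ‖u x‖ ^ 2

/-- The bottom of the spectrum of the Neumann realization of
`(−i∇−A̲)² + (x₁b₂−x₂b₁−τ)²` on `Ω`, via the Rayleigh quotient. -/
def specInf2D (Ω : Set (ℝ × ℝ)) (b1 b2 b3 τ : ℝ) : ℝ :=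
  sInf { r : ℝ | ∃ u : ℝ × ℝ → ℂ, ContDiff ℝ (⊤ : ℕ∞) u ∧ HasCompactSupport u ∧
    0 < norm2D Ω u ∧ r = energy2D Ω b1 b2 b3 τ u / norm2D Ω u }

/-- The band function `s(B;α,τ)` on the sector `S_α`. -/
def bandFn (α b1 b2 b3 τ : ℝ) : ℝ := specInf2D (sector α) b1 b2 b3 τ

/-- `Σ(B;α,τ,R)` : the Rayleigh quotient infimum over functions supported outside the
(closed Euclidean) ball of radius `R` centered at the origin. -/
def SigmaR (α b1 b2 b3 τ R : ℝ) : ℝ :=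
  sInf { r : ℝ | ∃ u : ℝ × ℝ → ℂ, ContDiff ℝ (⊤ : ℕ∞) u ∧ HasCompactSupport u ∧
    (tsupport u ⊆ {x : ℝ × ℝ | R ^ 2 < x.1 ^ 2 + x.2 ^ 2}) ∧
    0 < norm2D (sector α) u ∧
    r = energy2D (sector α) b1 b2 b3 τ u / norm2D (sector α) u }

/-- The bottom of the essential spectrum via Persson's characterization:
`s_ess(B;α,τ) = sup_{R>0} Σ(B;α,τ,R)`. -/
def sEss (α b1 b2 b3 τ : ℝ) : ℝ :=
  sSup { r : ℝ | ∃ R > (0 : ℝ), r = SigmaR α b1 b2 b3 τ R }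

/-- The 3D magnetic energy on a domain `Ω ⊆ ℝ³` for the constant field `(b₁,b₂,b₃)`,
in the gauge `A = (−x₂b₃, 0, x₂b₁ − x₁b₂)`. -/
def energy3D (Ω : Set (ℝ × ℝ × ℝ)) (b1 b2 b3 : ℝ) (u : ℝ × ℝ × ℝ → ℂ) : ℝ :=
  ∫ x in Ω,
    ‖(-Complex.I) * fderiv ℝ u x (1, 0, 0) + ((x.2.1 * b3 : ℝ) : ℂ) * u x‖ ^ 2
      + ‖fderiv ℝ u x (0, 1, 0)‖ ^ 2
      + ‖(-Complex.I) * fderiv ℝ u x (0, 0, 1) - ((x.2.1 * b1 : ℝ) : ℂ) * u x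
          + ((x.1 * b2 : ℝ) : ℂ) * u x‖ ^ 2

/-- The squared `L²`-norm of `u` on a domain `Ω ⊆ ℝ³`. -/
def norm3D (Ω : Set (ℝ × ℝ × ℝ)) (u : ℝ × ℝ × ℝ → ℂ) : ℝ := ∫ x in Ω, ‖u x‖ ^ 2

/-- `λ(B;W_α)` : the bottom of the spectrum of the Neumann magnetic Laplacian on the
wedge `W_α` with constant magnetic field `B = (b₁,b₂,b₃)`. -/
def lambdaWedge (α b1 b2 b3 : ℝ) : ℝ :=
  sInf { r : ℝ | ∃ u : ℝ × ℝ × ℝ → ℂ, ContDiff ℝ (⊤ : ℕ∞) u ∧ HasCompactSupport u ∧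
    0 < norm3D (wedge α) u ∧ r = energy3D (wedge α) b1 b2 b3 u / norm3D (wedge α) u }

/-- The de Gennes function `μ₁(ξ)`: bottom of the spectrum of the Neumann realization of
`−d²/dt² + (t−ξ)²` on the half-line. -/
def deGennes (ξ : ℝ) : ℝ :=
  sInf { r : ℝ | ∃ u : ℝ → ℂ, ContDiff ℝ (⊤ : ℕ∞) u ∧ HasCompactSupport u ∧
    (0 < ∫ t in Ioi (0 : ℝ), ‖u t‖ ^ 2) ∧
    r = (∫ t in Ioi (0 : ℝ), ‖deriv u t‖ ^ 2 + (t - ξ) ^ 2 * ‖u t‖ ^ 2) /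
        (∫ t in Ioi (0 : ℝ), ‖u t‖ ^ 2) }

/-- `Θ₀ := inf_ξ μ₁(ξ)`. -/
def Theta0 : ℝ := ⨅ ξ : ℝ, deGennes ξ

/-- The half-space `{(s,t,z) : t > 0}` in ℝ³. -/
def halfSpace3 : Set (ℝ × ℝ × ℝ) := {x | 0 < x.2.1}

/-- `σ(θ)` : the bottom of the spectrum of the Neumann magnetic Laplacian on the half-space
with a unit magnetic field making angle `θ` with the boundary. -/
def sigmaHS (θ : ℝ) : ℝ :=
  sInf { r : ℝ | ∃ u : ℝ × ℝ × ℝ → ℂ, ContDiff ℝ (⊤ : ℕ∞) u ∧ HasCompactSupport u ∧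
    (0 < ∫ x in halfSpace3, ‖u x‖ ^ 2) ∧
    r = (∫ x in halfSpace3,
          ‖fderiv ℝ u x (1, 0, 0)‖ ^ 2 + ‖fderiv ℝ u x (0, 1, 0)‖ ^ 2
            + ‖(-Complex.I) * fderiv ℝ u x (0, 0, 1)
                - ((x.2.1 * Real.cos θ : ℝ) : ℂ) * u x
                + ((x.1 * Real.sin θ : ℝ) : ℂ) * u x‖ ^ 2) /
        (∫ x in halfSpace3, ‖u x‖ ^ 2) }

/-- `μ(α)` : the bottom of the spectrum of the magnetic Neumann Laplacian on the sector
`S_α` with unit constant (scalar) magnetic field. -/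
def muSector (α : ℝ) : ℝ :=
  sInf { r : ℝ | ∃ u : ℝ × ℝ → ℂ, ContDiff ℝ (⊤ : ℕ∞) u ∧ HasCompactSupport u ∧
    0 < norm2D (sector α) u ∧
    r = (∫ x in sector α,
          ‖(-Complex.I) * fderiv ℝ u x (1, 0) + (x.2 : ℂ) * u x‖ ^ 2
            + ‖fderiv ℝ u x (0, 1)‖ ^ 2) / norm2D (sector α) u }

end MagWedge

namespace MagWedge
open scoped FourierTransform ContDiff

lemma Theta0_nonneg : 0 ≤ Theta0 := by
  refine Real.iInf_nonneg fun ξ => Real.sInf_nonneg ?_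
  rintro r ⟨u, -, -, h, rfl⟩
  exact div_nonneg (integral_nonneg fun t => by positivity) h.le

lemma Theta0_le (u : ℝ → ℂ) (hu : ContDiff ℝ (⊤ : ℕ∞) u) (hc : HasCompactSupport u) (ξ : ℝ) :
    Theta0 * ∫ t in Ioi (0 : ℝ), ‖u t‖ ^ 2 ≤
      ∫ t in Ioi (0 : ℝ), ‖deriv u t‖ ^ 2 + (t - ξ) ^ 2 * ‖u t‖ ^ 2 := by
  have h0 : 0 ≤ ∫ t in Ioi (0 : ℝ), ‖u t‖ ^ 2 := integral_nonneg fun t => by positivity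
  rcases h0.eq_or_lt with h | h
  · rw [← h, mul_zero]; exact integral_nonneg fun t => by positivity
  · rw [← le_div_iff₀ h]
    refine le_trans (ciInf_le ⟨0, ?_⟩ ξ) (csInf_le ⟨0, ?_⟩ ⟨u, hu, hc, h, rfl⟩)
    · rintro _ ⟨ξ, rfl⟩
      refine Real.sInf_nonneg ?_
      rintro r ⟨u, -, -, h, rfl⟩
      exact div_nonneg (integral_nonneg fun t => by positivity) h.le
    · rintro r ⟨u, -, -, h, rfl⟩
      exact div_nonneg (integral_nonneg fun t => by positivity) h.le

/-- smooth compactly supported -/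
def Cc (w : ℝ × ℝ → ℂ) : Prop := ContDiff ℝ (⊤ : ℕ∞) w ∧ HasCompactSupport w

lemma Cc.slice {w : ℝ × ℝ → ℂ} (hw : Cc w) (t : ℝ) :
    ContDiff ℝ (⊤ : ℕ∞) (fun s => w (s, t)) ∧ HasCompactSupport (fun s => w (s, t)) := by
  refine ⟨hw.1.comp (by fun_prop), ?_⟩
  refine hw.2.comp_isClosedEmbedding (g := fun s : ℝ => (s, t)) ?_
  exact Isometry.isClosedEmbedding (Isometry.of_dist_eq fun x y => by simp [Prod.dist_eq])

lemma Cc.d {w : ℝ × ℝ → ℂ} (hw : Cc w) (v : ℝ × ℝ) : Cc (fun x => fderiv ℝ w x v) := by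
  refine ⟨?_, ?_⟩
  · exact (hw.1.fderiv_right (m := (⊤ : ℕ∞)) (by simp)).clm_apply contDiff_const
  · exact (hw.2.fderiv ℝ).comp_left (g := fun L : ℝ × ℝ →L[ℝ] ℂ => L v) (by simp)

lemma Cc.mul {w : ℝ × ℝ → ℂ} (hw : Cc w) {g : ℝ × ℝ → ℂ} (hg : ContDiff ℝ (⊤ : ℕ∞) g) :
    Cc (fun x => g x * w x) := ⟨hg.mul hw.1, hw.2.mul_left⟩

lemma Cc.add {w v : ℝ × ℝ → ℂ} (hw : Cc w) (hv : Cc v) :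
    Cc (fun x => w x + v x) := ⟨hw.1.add hv.1, hw.2.add hv.2⟩

lemma Cc.integrable_sq {w : ℝ × ℝ → ℂ} (hw : Cc w) : Integrable (fun x => ‖w x‖ ^ 2) := by
  refine (Continuous.integrable_of_hasCompactSupport ?_ ?_)
  · exact hw.1.continuous.norm.pow 2
  · exact hw.2.comp_left (g := fun z : ℂ => ‖z‖ ^ 2) (by simp)

/-- partial Fourier transform in the first variable -/
def FW (w : ℝ × ℝ → ℂ) (t ξ : ℝ) : ℂ := 𝓕 (fun s => w (s, t)) ξ

lemma FW_eq (w : ℝ × ℝ → ℂ) (t ξ : ℝ) :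
    FW w t ξ = ∫ s, Complex.exp ((-2 * π * s * ξ : ℝ) * Complex.I) * w (s, t) := by
  rw [FW, Real.fourier_real_eq_integral_exp_smul]
  simp

lemma Cc.bound {w : ℝ × ℝ → ℂ} (hw : Cc w) :
    ∃ (K : Set ℝ) (M : ℝ), IsCompact K ∧ 0 ≤ M ∧ (∀ s t, t ∉ K → w (s, t) = 0) ∧
      ∀ s t, ‖w (s, t)‖ ≤ K.indicator (fun _ => M) s := by
  obtain ⟨M, hM⟩ := hw.1.continuous.bounded_above_of_compact_support hw.2
  have hcomp : IsCompact (tsupport w) := hw.2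
  refine ⟨Prod.fst '' tsupport w ∪ Prod.snd '' tsupport w, M,
    (hcomp.image continuous_fst).union (hcomp.image continuous_snd),
    (norm_nonneg _).trans (hM 0), ?_, ?_⟩
  · intro s t h
    by_contra h'
    exact h (Or.inr ⟨(s, t), subset_tsupport _ h', rfl⟩)
  · intro s t
    by_cases h : w (s, t) = 0
    · rw [h, norm_zero]
      exact indicator_nonneg (fun _ _ => (norm_nonneg _).trans (hM 0)) _
    · have hmem : s ∈ Prod.fst '' tsupport w ∪ Prod.snd '' tsupport w :=
        Or.inl ⟨(s, t), subset_tsupport _ h, rfl⟩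
      rw [indicator_of_mem hmem]
      exact hM _

lemma integrable_ind {K : Set ℝ} (hK : IsCompact K) (M : ℝ) :
    Integrable (K.indicator (fun _ => M)) := by
  rw [integrable_indicator_iff hK.measurableSet]
  exact integrableOn_const hK.measure_ne_top

lemma norm_e (x : ℝ) : ‖Complex.exp ((x : ℝ) * Complex.I)‖ = 1 := Complex.norm_exp_ofReal_mul_I x

lemma FW_continuous {w : ℝ × ℝ → ℂ} (hw : Cc w) : Continuous (fun p : ℝ × ℝ => FW w p.1 p.2) := by
  obtain ⟨K, M, hK, hM, -, hb⟩ := hw.bound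
  simp only [FW_eq]
  refine continuous_of_dominated (bound := K.indicator (fun _ => M)) ?_ ?_ (integrable_ind hK M) ?_
  · intro p
    refine Continuous.aestronglyMeasurable ?_
    have := hw.1.continuous
    fun_prop
  · intro p
    filter_upwards with s
    rw [norm_mul, norm_e, one_mul]
    exact hb _ _
  · filter_upwards with s
    have := hw.1.continuous
    fun_prop

lemma FW_hasDerivAt {w : ℝ × ℝ → ℂ} (hw : Cc w) (t ξ : ℝ) :
    HasDerivAt (fun t => FW w t ξ) (FW (fun x => fderiv ℝ w x (0, 1)) t ξ) t := by
  obtain ⟨K, M, hK, hM, -, hb⟩ := (hw.d (0, 1)).bound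
  simp only [FW_eq]
  have hcw := hw.1.continuous
  have hcd := (hw.d (0, 1)).1.continuous
  refine (hasDerivAt_integral_of_dominated_loc_of_deriv_le (s := univ)
    (bound := K.indicator (fun _ => M))
    (F' := fun t s => Complex.exp ((-2 * π * s * ξ : ℝ) * Complex.I) * fderiv ℝ w (s, t) (0, 1))
    univ_mem ?_ ?_ ?_ ?_ (integrable_ind hK M) ?_).2
  · filter_upwards with t
    exact Continuous.aestronglyMeasurable (by fun_prop)
  · refine Continuous.integrable_of_hasCompactSupport (by fun_prop) ?_
    exact (hw.slice t).2.mul_left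
  · exact Continuous.aestronglyMeasurable (by fun_prop)
  · filter_upwards with s t _
    rw [norm_mul, norm_e, one_mul]
    exact hb _ _
  · filter_upwards with s t _
    refine HasDerivAt.const_mul _ ?_
    have h1 : HasFDerivAt w (fderiv ℝ w (s, t)) (s, t) :=
      (hw.1.differentiable (by simp) _).hasFDerivAt
    have h2 : HasDerivAt (fun t : ℝ => (s, t)) ((0 : ℝ), (1 : ℝ)) t :=
      (hasDerivAt_const t s).prodMk (hasDerivAt_id t)
    exact h1.comp_hasDerivAt t h2

lemma FW_contDiff_aux (ξ : ℝ) (n : ℕ) : ∀ {w : ℝ × ℝ → ℂ}, Cc w →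
    ContDiff ℝ n (fun t => FW w t ξ) := by
  induction n with
  | zero =>
    intro w hw
    simp only [Nat.cast_zero, contDiff_zero]
    exact (FW_continuous hw).comp (by fun_prop : Continuous fun t : ℝ => (t, ξ))
  | succ n ih =>
    intro w hw
    push_cast
    rw [contDiff_succ_iff_deriv]
    refine ⟨fun t => (FW_hasDerivAt hw t ξ).differentiableAt, by simp, ?_⟩
    have : deriv (fun t => FW w t ξ) = fun t => FW (fun x => fderiv ℝ w x (0, 1)) t ξ := by
      ext t; exact (FW_hasDerivAt hw t ξ).deriv
    rw [this]
    exact ih (hw.d _)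

lemma FW_smooth {w : ℝ × ℝ → ℂ} (hw : Cc w) (ξ : ℝ) :
    ContDiff ℝ (⊤ : ℕ∞) (fun t => FW w t ξ) ∧ HasCompactSupport (fun t => FW w t ξ) := by
  refine ⟨contDiff_infty.2 fun n => FW_contDiff_aux ξ n hw, ?_⟩
  obtain ⟨K, M, hK, hM, h0, hb⟩ := hw.bound
  refine HasCompactSupport.intro hK fun t ht => ?_
  rw [FW_eq]
  simp [h0 _ t ht]

lemma FW_plancherel {w : ℝ × ℝ → ℂ} (hw : Cc w) (t : ℝ) :
    Integrable (fun ξ => ‖FW w t ξ‖ ^ 2) ∧ ∫ ξ, ‖FW w t ξ‖ ^ 2 = ∫ s, ‖w (s, t)‖ ^ 2 := by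
  let f : SchwartzMap ℝ ℂ := (hw.slice t).2.toSchwartzMap (hw.slice t).1
  have hf : ∀ ξ, (𝓕 f) ξ = FW w t ξ := fun ξ => by
    rw [SchwartzMap.fourier_coe]; rfl
  constructor
  · have := ((𝓕 f).memLp 2 volume).integrable_norm_pow (by norm_num)
    simpa [hf] using this
  · have := SchwartzMap.integral_norm_sq_fourier f
    simp only [hf] at this
    exact this

lemma FW_total {w : ℝ × ℝ → ℂ} (hw : Cc w) :
    Integrable (fun ξ => ∫ t in Ioi (0 : ℝ), ‖FW w t ξ‖ ^ 2) ∧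
    ∫ ξ, ∫ t in Ioi (0 : ℝ), ‖FW w t ξ‖ ^ 2 = ∫ x in {x : ℝ × ℝ | 0 < x.2}, ‖w x‖ ^ 2 := by
  have hset : {x : ℝ × ℝ | 0 < x.2} = univ ×ˢ Ioi (0 : ℝ) := by ext; simp
  have hmeas : (volume : Measure (ℝ × ℝ)).restrict {x : ℝ × ℝ | 0 < x.2}
      = (volume : Measure ℝ).prod (volume.restrict (Ioi (0 : ℝ))) := by
    rw [hset, Measure.volume_eq_prod, ← Measure.prod_restrict, Measure.restrict_univ]
  have hwi : Integrable (fun x : ℝ × ℝ => ‖w x‖ ^ 2)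
      ((volume : Measure ℝ).prod (volume.restrict (Ioi (0 : ℝ)))) := by
    rw [← hmeas]; exact hw.integrable_sq.integrableOn
  have hI : Integrable (fun p : ℝ × ℝ => ‖FW w p.1 p.2‖ ^ 2)
      ((volume.restrict (Ioi (0 : ℝ))).prod volume) := by
    have hc : Continuous (fun p : ℝ × ℝ => ‖FW w p.1 p.2‖ ^ 2) := (FW_continuous hw).norm.pow 2
    rw [integrable_prod_iff hc.aestronglyMeasurable]
    constructor
    · filter_upwards with t using (FW_plancherel hw t).1
    · simp only [norm_pow, norm_norm, (FW_plancherel hw _).2]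
      exact hwi.integral_prod_right
  refine ⟨hI.integral_prod_right, ?_⟩
  rw [← integral_integral_swap hI, hmeas, integral_prod_symm _ hwi]
  simp only [(FW_plancherel hw _).2]

lemma FW_mul_snd {w : ℝ × ℝ → ℂ} (g : ℝ → ℂ) (t ξ : ℝ) :
    FW (fun x => g x.2 * w x) t ξ = g t * FW w t ξ := by
  simp only [FW_eq, ← integral_const_mul]
  congr 1; ext s; ring

lemma FW_d1 {w : ℝ × ℝ → ℂ} (hw : Cc w) (b t ξ : ℝ) :
    FW (fun x => -Complex.I * fderiv ℝ w x (1, 0) + -((b * x.2 : ℝ) : ℂ) * w x) t ξ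
      = ((2 * π * ξ - b * t : ℝ) : ℂ) * FW w t ξ := by
  have hs := hw.slice t
  have hd : ∀ s, HasDerivAt (fun s => w (s, t)) (fderiv ℝ w (s, t) (1, 0)) s := by
    intro s
    have h1 : HasFDerivAt w (fderiv ℝ w (s, t)) (s, t) :=
      (hw.1.differentiable (by simp) _).hasFDerivAt
    have h2 : HasDerivAt (fun s : ℝ => (s, t)) ((1 : ℝ), (0 : ℝ)) s :=
      (hasDerivAt_id s).prodMk (hasDerivAt_const s t)
    exact h1.comp_hasDerivAt s h2
  have hder : deriv (fun s => w (s, t)) = fun s => fderiv ℝ w (s, t) (1, 0) := by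
    ext s; exact (hd s).deriv
  have h := Real.fourier_deriv (f := fun s => w (s, t))
    (hs.1.continuous.integrable_of_hasCompactSupport hs.2) (fun s => (hd s).differentiableAt)
    (by rw [hder]
        exact ((hw.d (1,0)).slice t).1.continuous.integrable_of_hasCompactSupport
          ((hw.d (1,0)).slice t).2)
  have h' : FW (fun x => fderiv ℝ w x (1, 0)) t ξ = (2 * π * Complex.I * ξ) * FW w t ξ := by
    have := congrFun h ξ
    rw [hder] at this
    simpa [FW] using this
  have hi1 : Integrable fun s : ℝ => Complex.exp ((-2 * π * s * ξ : ℝ) * Complex.I) *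
      fderiv ℝ w (s, t) (1, 0) := by
    refine Continuous.integrable_of_hasCompactSupport ?_ ((hw.d (1,0)).slice t).2.mul_left
    have := ((hw.d (1,0)).slice t).1.continuous
    fun_prop
  have hi2 : Integrable fun s : ℝ => Complex.exp ((-2 * π * s * ξ : ℝ) * Complex.I) *
      w (s, t) := by
    refine Continuous.integrable_of_hasCompactSupport ?_ (hw.slice t).2.mul_left
    have := hw.1.continuous
    fun_prop
  have : FW (fun x => -Complex.I * fderiv ℝ w x (1, 0) + -((b * x.2 : ℝ) : ℂ) * w x) t ξ
      = -Complex.I * FW (fun x => fderiv ℝ w x (1, 0)) t ξ + -((b * t : ℝ) : ℂ) * FW w t ξ := by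
    simp only [FW_eq]
    rw [← integral_const_mul, ← integral_const_mul, ← integral_add (hi1.const_mul _) (hi2.const_mul _)]
    congr 1; ext s; ring
  rw [this, h']
  push_cast
  linear_combination (-2 * π * ξ * FW w t ξ) * Complex.I_sq

lemma integral_add3 {X : Type*} [MeasurableSpace X] {μ : Measure X} {f g h : X → ℝ}
    (hf : Integrable f μ) (hg : Integrable g μ) (hh : Integrable h μ) :
    Integrable (fun x => f x + g x + h x) μ ∧
    ∫ x, f x + g x + h x ∂μ = ∫ x, f x ∂μ + ∫ x, g x ∂μ + ∫ x, h x ∂μ := by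
  have h1 : Integrable (fun x => f x + g x) μ := hf.add hg
  exact ⟨h1.add hh, by rw [integral_add h1 hh, integral_add hf hg]⟩

lemma halfplane_flat {w : ℝ × ℝ → ℂ} (hw : Cc w) (b κ τ : ℝ) (hb : b ^ 2 + κ ^ 2 = 1) :
    Theta0 * ∫ x in {x : ℝ × ℝ | 0 < x.2}, ‖w x‖ ^ 2 ≤
    ∫ x in {x : ℝ × ℝ | 0 < x.2},
      ‖-Complex.I * fderiv ℝ w x (1, 0) + -((b * x.2 : ℝ) : ℂ) * w x‖ ^ 2
      + ‖fderiv ℝ w x (0, 1)‖ ^ 2 + (κ * x.2 - τ) ^ 2 * ‖w x‖ ^ 2 := by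
  have c1 : Cc (fun x => -Complex.I * fderiv ℝ w x (1, 0) + -((b * x.2 : ℝ) : ℂ) * w x) := by
    refine Cc.add ((hw.d _).mul contDiff_const) (hw.mul ?_)
    exact (Complex.ofRealCLM.contDiff.comp
      (by fun_prop : ContDiff ℝ (⊤ : ℕ∞) fun x : ℝ × ℝ => b * x.2)).neg
  have c2 := hw.d (0, 1)
  have c3 : Cc (fun x => ((κ * x.2 - τ : ℝ) : ℂ) * w x) :=
    hw.mul (Complex.ofRealCLM.contDiff.comp
      (by fun_prop : ContDiff ℝ (⊤ : ℕ∞) fun x : ℝ × ℝ => κ * x.2 - τ))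
  have e3 : ∀ x : ℝ × ℝ, ‖((κ * x.2 - τ : ℝ) : ℂ) * w x‖ ^ 2 = (κ * x.2 - τ) ^ 2 * ‖w x‖ ^ 2 := by
    intro x; rw [norm_mul, mul_pow, Complex.norm_real, Real.norm_eq_abs, sq_abs]
  simp only [← e3]
  have T := integral_add3 (FW_total c1).1 (FW_total c2).1 (FW_total c3).1
  rw [(integral_add3 c1.integrable_sq.integrableOn c2.integrable_sq.integrableOn
    c3.integrable_sq.integrableOn).2,
    ← (FW_total hw).2, ← (FW_total c1).2, ← (FW_total c2).2, ← (FW_total c3).2,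
    ← T.2, ← integral_const_mul]
  refine integral_mono ((FW_total hw).1.const_mul _) T.1 fun ξ => ?_
  have hint : ∀ {v : ℝ × ℝ → ℂ}, Cc v → IntegrableOn (fun t => ‖FW v t ξ‖ ^ 2) (Ioi 0) := by
    intro v hv
    refine (Continuous.integrable_of_hasCompactSupport ?_ ?_).integrableOn
    · exact (FW_smooth hv ξ).1.continuous.norm.pow 2
    · exact (FW_smooth hv ξ).2.comp_left (g := fun z : ℂ => ‖z‖ ^ 2) (by simp)
  have key := Theta0_le _ (FW_smooth hw ξ).1 (FW_smooth hw ξ).2 (b * (2 * π * ξ) + κ * τ)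
  refine key.trans ?_
  have T' := integral_add3 (hint c1) (hint c2) (hint c3)
  rw [← T'.2]
  refine integral_mono_of_nonneg ?_ T'.1 ?_
  · filter_upwards with t; positivity
  · filter_upwards with t
    rw [(FW_hasDerivAt hw t ξ).deriv, FW_d1 hw, FW_mul_snd (fun t => ((κ * t - τ : ℝ) : ℂ)),
      norm_mul, norm_mul, mul_pow, mul_pow, Complex.norm_real, Complex.norm_real,
      Real.norm_eq_abs, Real.norm_eq_abs, sq_abs, sq_abs]
    have : (2 * π * ξ - b * t) ^ 2 + (κ * t - τ) ^ 2 =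
      (t - (b * (2 * π * ξ) + κ * τ)) ^ 2 + (κ * (2 * π * ξ) - b * τ) ^ 2 := by
      linear_combination (t ^ 2 - (2 * π * ξ) ^ 2 - τ ^ 2) * hb
    nlinarith [mul_nonneg (sq_nonneg (κ * (2 * π * ξ) - b * τ)) (sq_nonneg ‖FW w t ξ‖)]

end MagWedge

namespace MagWedge
open scoped FourierTransform ContDiff

/-- The linear reflection with matrix `((c, σ), (σ, -c))`. -/
def refl2 (c σ : ℝ) : ℝ × ℝ →ₗ[ℝ] ℝ × ℝ where
  toFun x := (c * x.1 + σ * x.2, σ * x.1 - c * x.2)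
  map_add' x y := by ext <;> simp <;> ring
  map_smul' r x := by ext <;> simp <;> ring

lemma refl2_apply (c σ : ℝ) (x : ℝ × ℝ) :
    refl2 c σ x = (c * x.1 + σ * x.2, σ * x.1 - c * x.2) := rfl

lemma refl2_invol {c σ : ℝ} (h : c ^ 2 + σ ^ 2 = 1) (x : ℝ × ℝ) :
    refl2 c σ (refl2 c σ x) = x := by
  simp only [refl2_apply]
  ext
  · simp only; linear_combination x.1 * h
  · simp only; linear_combination x.2 * h

lemma refl2_cont (c σ : ℝ) : Continuous (refl2 c σ) := by
  show Continuous fun x : ℝ × ℝ => (c * x.1 + σ * x.2, σ * x.1 - c * x.2)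
  fun_prop

/-- `refl2` as a homeomorphism. -/
def refl2H {c σ : ℝ} (h : c ^ 2 + σ ^ 2 = 1) : (ℝ × ℝ) ≃ₜ (ℝ × ℝ) where
  toFun := refl2 c σ
  invFun := refl2 c σ
  left_inv := refl2_invol h
  right_inv := refl2_invol h
  continuous_toFun := refl2_cont c σ
  continuous_invFun := refl2_cont c σ

lemma refl2_mp {c σ : ℝ} (h : c ^ 2 + σ ^ 2 = 1) :
    MeasurePreserving (refl2 c σ) volume volume := by
  refine ⟨(refl2_cont c σ).measurable, ?_⟩
  have hd : LinearMap.det (refl2 c σ) * LinearMap.det (refl2 c σ) = 1 := by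
    rw [← LinearMap.det_comp]
    have : refl2 c σ ∘ₗ refl2 c σ = LinearMap.id := by
      refine LinearMap.ext fun x => ?_
      exact refl2_invol h x
    rw [this, LinearMap.det_id]
  have hne : LinearMap.det (refl2 c σ) ≠ 0 := by
    intro h0; rw [h0] at hd; simp at hd
  have habs : |LinearMap.det (refl2 c σ)| = 1 := by
    rw [← sq_eq_sq₀ (abs_nonneg _) zero_le_one, sq_abs]; linarith [hd]
  rw [Measure.map_linearMap_addHaar_eq_smul_addHaar _ hne, abs_inv, habs]
  simp

lemma refl2_setIntegral {c σ : ℝ} (h : c ^ 2 + σ ^ 2 = 1) (f : ℝ × ℝ → ℝ) :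
    ∫ x in {x : ℝ × ℝ | 0 < σ * x.1 - c * x.2}, f x =
      ∫ x in {x : ℝ × ℝ | 0 < x.2}, f (refl2 c σ x) := by
  have hemb : MeasurableEmbedding (refl2 c σ) := (refl2H h).measurableEmbedding
  have := (refl2_mp h).setIntegral_preimage_emb hemb f {x : ℝ × ℝ | 0 < σ * x.1 - c * x.2}
  rw [← this]
  congr 2
  ext x
  simp only [mem_preimage, mem_ofPred_eq]
  have h2 := congrArg Prod.snd (refl2_invol h x)
  rw [refl2_apply] at h2
  simp only at h2
  rw [h2]

lemma fderiv_fst {w : ℝ × ℝ → ℂ} (hw : Differentiable ℝ w) {s t : ℝ} {w' : ℂ}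
    (h : HasDerivAt (fun s => w (s, t)) w' s) : fderiv ℝ w (s, t) (1, 0) = w' := by
  have h1 : HasFDerivAt w (fderiv ℝ w (s, t)) (s, t) := (hw _).hasFDerivAt
  have h2 : HasDerivAt (fun s : ℝ => (s, t)) ((1 : ℝ), (0 : ℝ)) s :=
    (hasDerivAt_id s).prodMk (hasDerivAt_const s t)
  exact (h1.comp_hasDerivAt s h2).unique h

lemma fderiv_snd {w : ℝ × ℝ → ℂ} (hw : Differentiable ℝ w) {s t : ℝ} {w' : ℂ}
    (h : HasDerivAt (fun t => w (s, t)) w' t) : fderiv ℝ w (s, t) (0, 1) = w' := by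
  have h1 : HasFDerivAt w (fderiv ℝ w (s, t)) (s, t) := (hw _).hasFDerivAt
  have h2 : HasDerivAt (fun t : ℝ => (s, t)) ((0 : ℝ), (1 : ℝ)) t :=
    (hasDerivAt_const t s).prodMk (hasDerivAt_id t)
  exact (h1.comp_hasDerivAt t h2).unique h

lemma fderiv_comb (L : ℝ × ℝ →L[ℝ] ℂ) (p q : ℝ) :
    L (p, q) = p * L (1, 0) + q * L (0, 1) := by
  have : ((p, q) : ℝ × ℝ) = p • ((1 : ℝ), (0 : ℝ)) + q • ((0 : ℝ), (1 : ℝ)) := by ext <;> simp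
  rw [this, map_add, map_smul, map_smul]
  simp

lemma rot_norm (c σ : ℝ) (h : c ^ 2 + σ ^ 2 = 1) (P Q : ℂ) :
    ‖(c : ℂ) * P + σ * Q‖ ^ 2 + ‖(σ : ℂ) * P - c * Q‖ ^ 2 = ‖P‖ ^ 2 + ‖Q‖ ^ 2 := by
  simp only [Complex.sq_norm, Complex.normSq_apply, Complex.add_re, Complex.add_im,
    Complex.sub_re, Complex.sub_im, Complex.mul_re, Complex.mul_im, Complex.ofReal_re,
    Complex.ofReal_im]
  linear_combination (P.re ^ 2 + P.im ^ 2 + Q.re ^ 2 + Q.im ^ 2) * h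

lemma halfplane {v : ℝ × ℝ → ℂ} (hv : Cc v) {c σ : ℝ} (h : c ^ 2 + σ ^ 2 = 1)
    {b κ : ℝ} (τ : ℝ) (hb : b ^ 2 + κ ^ 2 = 1) :
    Theta0 * ∫ x in {x : ℝ × ℝ | 0 < σ * x.1 - c * x.2}, ‖v x‖ ^ 2 ≤
    ∫ x in {x : ℝ × ℝ | 0 < σ * x.1 - c * x.2},
      ‖(-Complex.I) * fderiv ℝ v x (1, 0) + ((x.2 * b : ℝ) : ℂ) * v x‖ ^ 2
      + ‖fderiv ℝ v x (0, 1)‖ ^ 2 + (κ * (σ * x.1 - c * x.2) - τ) ^ 2 * ‖v x‖ ^ 2 := by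
  rw [refl2_setIntegral h, refl2_setIntegral h]
  let ph : ℝ × ℝ → ℝ := fun x =>
    b * σ * (σ * x.1 * x.2 - c * x.2 ^ 2 / 2) + b * c * σ * x.1 ^ 2 / 2
  let g : ℝ × ℝ → ℂ := fun x => Complex.exp ((ph x : ℝ) * Complex.I)
  have hph : ContDiff ℝ (⊤ : ℕ∞) ph := by fun_prop
  have hg : ContDiff ℝ (⊤ : ℕ∞) g :=
    ((Complex.ofRealCLM.contDiff.comp hph).mul contDiff_const).cexp
  have hrs : ContDiff ℝ (⊤ : ℕ∞) (fun x => refl2 c σ x) := by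
    show ContDiff ℝ (⊤ : ℕ∞) fun x : ℝ × ℝ => (c * x.1 + σ * x.2, σ * x.1 - c * x.2)
    fun_prop
  have hV : Cc (fun x => v (refl2 c σ x)) :=
    ⟨hv.1.comp hrs, hv.2.comp_isClosedEmbedding (refl2H h).isClosedEmbedding⟩
  have hw : Cc (fun x => g x * v (refl2 c σ x)) := hV.mul hg
  have hng : ∀ x, ‖g x‖ = 1 := fun x => norm_e _
  have key := halfplane_flat hw b κ τ hb
  have hn : ∀ x, ‖g x * v (refl2 c σ x)‖ ^ 2 = ‖v (refl2 c σ x)‖ ^ 2 := by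
    intro x; rw [norm_mul, hng, one_mul]
  simp only [hn] at key
  refine key.trans (le_of_eq ?_)
  congr 1
  ext ⟨s, t⟩
  have hvd : HasFDerivAt v (fderiv ℝ v (refl2 c σ (s, t))) (refl2 c σ (s, t)) :=
    (hv.1.differentiable (by simp) _).hasFDerivAt
  set D1 := fderiv ℝ v (refl2 c σ (s, t)) (1, 0) with hD1
  set D2 := fderiv ℝ v (refl2 c σ (s, t)) (0, 1) with hD2
  have hVs : HasDerivAt (fun s => v (refl2 c σ (s, t))) (c * D1 + σ * D2) s := by
    have h2 : HasDerivAt (fun s : ℝ => refl2 c σ (s, t)) (c, σ) s := by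
      simp only [refl2_apply]
      refine HasDerivAt.prodMk ?_ ?_
      · simpa using ((hasDerivAt_id s).const_mul c).add_const (σ * t)
      · simpa using ((hasDerivAt_id s).const_mul σ).sub_const (c * t)
    have := hvd.comp_hasDerivAt s h2
    rwa [fderiv_comb] at this
  have hVt : HasDerivAt (fun t => v (refl2 c σ (s, t))) (σ * D1 - c * D2) t := by
    have h2 : HasDerivAt (fun t : ℝ => refl2 c σ (s, t)) (σ, -c) t := by
      simp only [refl2_apply]
      refine HasDerivAt.prodMk ?_ ?_
      · simpa using ((hasDerivAt_id t).const_mul σ).const_add (c * s)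
      · simpa using ((hasDerivAt_id t).const_mul c).const_sub (σ * s)
    have := hvd.comp_hasDerivAt t h2
    rw [fderiv_comb] at this
    refine HasDerivAt.congr_deriv this ?_
    push_cast; ring
  have hgs : HasDerivAt (fun s => g (s, t))
      (g (s, t) * (((b * σ * σ * t + b * c * σ * s : ℝ) : ℂ) * Complex.I)) s := by
    have h1 : HasDerivAt (fun s => ph (s, t)) (b * σ * σ * t + b * c * σ * s) s := by
      have e1 := (((((hasDerivAt_id s).const_mul σ).mul_const t).sub_const
        (c * t ^ 2 / 2)).const_mul (b * σ)).add
        ((((hasDerivAt_id s).pow 2).const_mul (b * c * σ)).div_const 2)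
      refine HasDerivAt.congr_deriv e1 ?_
      simp; ring
    exact (h1.ofReal_comp.mul_const Complex.I).cexp
  have hgt : HasDerivAt (fun t => g (s, t))
      (g (s, t) * (((b * σ * (σ * s - c * t) : ℝ) : ℂ) * Complex.I)) t := by
    have h1 : HasDerivAt (fun t => ph (s, t)) (b * σ * (σ * s - c * t)) t := by
      have e1 := (((((hasDerivAt_id t).const_mul (σ * s)).sub
        ((((hasDerivAt_id t).pow 2).const_mul c).div_const 2)).const_mul (b * σ)).add_const
        (b * c * σ * s ^ 2 / 2))
      refine HasDerivAt.congr_deriv e1 ?_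
      simp; left; ring
    exact (h1.ofReal_comp.mul_const Complex.I).cexp
  rw [fderiv_fst (hw.1.differentiable (by simp)) (hgs.mul hVs),
    fderiv_snd (hw.1.differentiable (by simp)) (hgt.mul hVt)]
  have hd : σ * (refl2 c σ (s, t)).1 - c * (refl2 c σ (s, t)).2 = t := by
    rw [refl2_apply]; simp only; linear_combination t * h
  have hx2 : (refl2 c σ (s, t)).2 = σ * s - c * t := rfl
  rw [hd, hx2]
  set V := v (refl2 c σ (s, t)) with hVdef
  congr 1
  have hR := rot_norm c σ h (-Complex.I * D1 + (((σ * s - c * t) * b : ℝ) : ℂ) * V)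
    (-Complex.I * D2)
  have hQ : ‖-Complex.I * D2‖ = ‖D2‖ := by simp
  rw [hQ] at hR
  rw [← hR]
  have hC : (c : ℂ) ^ 2 + (σ : ℂ) ^ 2 = 1 := by exact_mod_cast h
  congr 2
  · rw [← one_mul ‖(c : ℂ) * _ + _‖, ← hng (s, t), ← norm_mul]
    congr 1
    push_cast
    linear_combination (-(g (s,t) * V * (b * σ * σ * t + b * c * σ * s))) * Complex.I_sq
      + (b * t * g (s,t) * V) * hC
  · have hz : ∀ z : ℂ, ‖z‖ = ‖-Complex.I * z‖ := by
      intro z; simp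
    rw [hz (_ + _), ← one_mul ‖(σ : ℂ) * _ - _‖, ← hng (s, t), ← norm_mul]
    congr 1
    push_cast
    linear_combination (-(g (s,t) * V * (b * σ * (σ * s - c * t)))) * Complex.I_sq

end MagWedge

namespace MagWedge
open scoped FourierTransform ContDiff

/-- The energy density. -/
def dens (b1 b2 b3 τ : ℝ) (u : ℝ × ℝ → ℂ) (x : ℝ × ℝ) : ℝ :=
  ‖(-Complex.I) * fderiv ℝ u x (1, 0) + ((x.2 * b3 : ℝ) : ℂ) * u x‖ ^ 2
      + ‖fderiv ℝ u x (0, 1)‖ ^ 2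
      + (x.1 * b2 - x.2 * b1 - τ) ^ 2 * ‖u x‖ ^ 2

lemma energy2D_eq (Ω : Set (ℝ × ℝ)) (b1 b2 b3 τ : ℝ) (u : ℝ × ℝ → ℂ) :
    energy2D Ω b1 b2 b3 τ u = ∫ x in Ω, dens b1 b2 b3 τ u x := rfl

lemma dens_nonneg (b1 b2 b3 τ : ℝ) (u : ℝ × ℝ → ℂ) (x : ℝ × ℝ) : 0 ≤ dens b1 b2 b3 τ u x := by
  unfold dens; positivity

lemma dens_integrable (b1 b2 b3 τ : ℝ) {u : ℝ × ℝ → ℂ} (hu : Cc u) :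
    Integrable (dens b1 b2 b3 τ u) := by
  have c1 : Cc (fun x => -Complex.I * fderiv ℝ u x (1, 0) + ((x.2 * b3 : ℝ) : ℂ) * u x) := by
    refine Cc.add ((hu.d _).mul contDiff_const) (hu.mul ?_)
    exact (Complex.ofRealCLM.contDiff.comp
      (by fun_prop : ContDiff ℝ (⊤ : ℕ∞) fun x : ℝ × ℝ => x.2 * b3))
  have c2 := hu.d (0, 1)
  have c3 : Cc (fun x => ((x.1 * b2 - x.2 * b1 - τ : ℝ) : ℂ) * u x) :=
    hu.mul (Complex.ofRealCLM.contDiff.comp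
      (by fun_prop : ContDiff ℝ (⊤ : ℕ∞) fun x : ℝ × ℝ => x.1 * b2 - x.2 * b1 - τ))
  have e3 : ∀ x : ℝ × ℝ, ‖((x.1 * b2 - x.2 * b1 - τ : ℝ) : ℂ) * u x‖ ^ 2
      = (x.1 * b2 - x.2 * b1 - τ) ^ 2 * ‖u x‖ ^ 2 := by
    intro x; rw [norm_mul, mul_pow, Complex.norm_real, Real.norm_eq_abs, sq_abs]
  have := (integral_add3 c1.integrable_sq c2.integrable_sq c3.integrable_sq).1
  simp only [e3] at this
  exact this

lemma ims (b1 b2 b3 τ : ℝ) {u : ℝ × ℝ → ℂ} (hu : Cc u) {θ : ℝ → ℝ} (hθ : ContDiff ℝ (⊤ : ℕ∞) θ)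
    (x : ℝ × ℝ) :
    dens b1 b2 b3 τ (fun x => ((Real.sin (θ x.2) : ℝ) : ℂ) * u x) x
      + dens b1 b2 b3 τ (fun x => ((Real.cos (θ x.2) : ℝ) : ℂ) * u x) x
    = dens b1 b2 b3 τ u x + (deriv θ x.2) ^ 2 * ‖u x‖ ^ 2 := by
  obtain ⟨s, t⟩ := x
  have hs : Cc (fun x => ((Real.sin (θ x.2) : ℝ) : ℂ) * u x) :=
    hu.mul (Complex.ofRealCLM.contDiff.comp (Real.contDiff_sin.comp (hθ.comp contDiff_snd)))
  have hc : Cc (fun x => ((Real.cos (θ x.2) : ℝ) : ℂ) * u x) :=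
    hu.mul (Complex.ofRealCLM.contDiff.comp (Real.contDiff_cos.comp (hθ.comp contDiff_snd)))
  have h1 : HasFDerivAt u (fderiv ℝ u (s, t)) (s, t) :=
    (hu.1.differentiable (by simp) _).hasFDerivAt
  have hus : HasDerivAt (fun s => u (s, t)) (fderiv ℝ u (s, t) (1, 0)) s :=
    h1.comp_hasDerivAt (f := fun s : ℝ => (s, t)) s
      ((hasDerivAt_id s).prodMk (hasDerivAt_const s t))
  have hut : HasDerivAt (fun t => u (s, t)) (fderiv ℝ u (s, t) (0, 1)) t :=
    h1.comp_hasDerivAt (f := fun t : ℝ => (s, t)) t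
      ((hasDerivAt_const t s).prodMk (hasDerivAt_id t))
  have hd : HasDerivAt θ (deriv θ t) t := (hθ.differentiable (by simp) t).hasDerivAt
  unfold dens
  simp only
  rw [fderiv_fst (hs.1.differentiable (by simp)) (hus.const_mul ((Real.sin (θ t) : ℝ) : ℂ)),
    fderiv_fst (hc.1.differentiable (by simp)) (hus.const_mul ((Real.cos (θ t) : ℝ) : ℂ)),
    fderiv_snd (hs.1.differentiable (by simp)) (hd.sin.ofReal_comp.mul hut),
    fderiv_snd (hc.1.differentiable (by simp)) (hd.cos.ofReal_comp.mul hut)]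
  have hsc := Real.sin_sq_add_cos_sq (θ t)
  set S := Real.sin (θ t)
  set C := Real.cos (θ t)
  set U := u (s, t)
  set D1 := fderiv ℝ u (s, t) (1, 0)
  set D2 := fderiv ℝ u (s, t) (0, 1)
  set T := deriv θ t
  have hR := rot_norm C S (by linarith) ((T : ℂ) * U) D2
  have e1 : ∀ r : ℝ, ‖-Complex.I * ((r : ℂ) * D1) + ((t * b3 : ℝ) : ℂ) * ((r : ℂ) * U)‖ ^ 2
      = r ^ 2 * ‖-Complex.I * D1 + ((t * b3 : ℝ) : ℂ) * U‖ ^ 2 := by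
    intro r
    rw [← sq_abs r, ← Real.norm_eq_abs, ← Complex.norm_real, ← mul_pow, ← norm_mul]
    congr 2; ring
  have e2 : ∀ r : ℝ, ‖(r : ℂ) * U‖ ^ 2 = r ^ 2 * ‖U‖ ^ 2 := by
    intro r
    rw [norm_mul, mul_pow, Complex.norm_real, Real.norm_eq_abs, sq_abs]
  have e3 : ‖((C * T : ℝ) : ℂ) * U + (S : ℂ) * D2‖ = ‖(C : ℂ) * (T * U) + S * D2‖ := by
    congr 1; push_cast; ring
  have e4 : ‖((-S * T : ℝ) : ℂ) * U + (C : ℂ) * D2‖ = ‖(S : ℂ) * (T * U) - C * D2‖ := by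
    rw [← norm_neg]; congr 1; push_cast; ring
  rw [e1, e1, e2, e2, e3, e4]
  rw [e2] at hR
  linear_combination hR + (‖-Complex.I * D1 + ((t * b3 : ℝ) : ℂ) * U‖ ^ 2
    + (s * b2 - t * b1 - τ) ^ 2 * ‖U‖ ^ 2) * hsc

lemma measurableSet_half (c σ : ℝ) : MeasurableSet {x : ℝ × ℝ | 0 < σ * x.1 - c * x.2} :=
  (isOpen_lt (by fun_prop) (by fun_prop)).measurableSet

lemma ae_ne_line {c σ : ℝ} (h : c ^ 2 + σ ^ 2 = 1) :
    ∀ᵐ x : ℝ × ℝ, σ * x.1 - c * x.2 ≠ 0 := by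
  have h0 : volume {x : ℝ × ℝ | x.2 = 0} = 0 := by
    have : {x : ℝ × ℝ | x.2 = 0} = univ ×ˢ {(0 : ℝ)} := by ext; simp
    rw [this, Measure.volume_eq_prod, Measure.prod_prod]; simp
  have h1 := (refl2_mp h).measure_preimage
    (s := {x : ℝ × ℝ | x.2 = 0}) (measurableSet_eq_fun (by fun_prop) (by fun_prop)).nullMeasurableSet
  rw [h0] at h1
  rw [ae_iff]
  convert h1 using 2
  ext x
  simp [refl2_apply]

lemma piece {v : ℝ × ℝ → ℂ} (hv : Cc v) {c σ : ℝ} (h : c ^ 2 + σ ^ 2 = 1) {S : Set (ℝ × ℝ)}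
    (hSm : MeasurableSet S)
    (hS : ∀ x ∈ S, 0 ≤ σ * x.1 - c * x.2)
    (hsup : ∀ x ∈ tsupport v, 0 < σ * x.1 - c * x.2 → x ∈ S)
    {b κ : ℝ} (τ : ℝ) (hb : b ^ 2 + κ ^ 2 = 1) :
    Theta0 * norm2D S v ≤ energy2D S (κ * c) (κ * σ) b τ v := by
  have key := halfplane hv h τ hb
  have e : ∀ x : ℝ × ℝ,
      ‖(-Complex.I) * fderiv ℝ v x (1, 0) + ((x.2 * b : ℝ) : ℂ) * v x‖ ^ 2
      + ‖fderiv ℝ v x (0, 1)‖ ^ 2 + (κ * (σ * x.1 - c * x.2) - τ) ^ 2 * ‖v x‖ ^ 2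
      = dens (κ * c) (κ * σ) b τ v x := by
    intro x; unfold dens; ring
  simp only [e] at key
  have n1 : norm2D S v ≤ ∫ x in {x : ℝ × ℝ | 0 < σ * x.1 - c * x.2}, ‖v x‖ ^ 2 := by
    refine setIntegral_mono_set hv.integrable_sq.integrableOn
      (Eventually.of_forall fun x => by positivity) ?_
    filter_upwards [ae_ne_line h] with x hx hxS
    exact lt_of_le_of_ne (hS x hxS) (Ne.symm hx)
  have n2 : ∫ x in {x : ℝ × ℝ | 0 < σ * x.1 - c * x.2}, dens (κ * c) (κ * σ) b τ v x
      ≤ energy2D S (κ * c) (κ * σ) b τ v := by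
    rw [energy2D_eq, setIntegral_eq_of_subset_of_forall_sdiff_eq_zero
      (s := {x : ℝ × ℝ | 0 < σ * x.1 - c * x.2} ∩ S) (measurableSet_half c σ) inter_subset_left]
    · exact setIntegral_mono_set (dens_integrable _ _ _ _ hv).integrableOn
        (Eventually.of_forall fun x => dens_nonneg _ _ _ _ _ _)
        (Eventually.of_forall fun x hx => hx.2)
    · rintro x ⟨hx, hx2⟩
      have hnx : x ∉ tsupport v := fun hh => hx2 ⟨hx, hsup x hh hx⟩
      unfold dens
      rw [fderiv_of_notMem_tsupport ℝ hnx, image_eq_zero_of_notMem_tsupport hnx]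
      simp
  exact (mul_le_mul_of_nonneg_left n1 Theta0_nonneg).trans (key.trans n2)

lemma mem_sector {α : ℝ} (hα : α ∈ Ioo 0 π) (x : ℝ × ℝ) :
    x ∈ sector α ↔ |x.2| * Real.cos (α / 2) ≤ x.1 * Real.sin (α / 2) := by
  have hc : 0 < Real.cos (α / 2) := Real.cos_pos_of_mem_Ioo ⟨by linarith [hα.1, hα.2], by linarith [hα.2]⟩
  show |x.2| ≤ x.1 * Real.tan (α / 2) ↔ _
  rw [Real.tan_eq_sin_div_cos, ← mul_div_assoc, le_div_iff₀ hc]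

lemma measurableSet_sector (α : ℝ) : MeasurableSet (sector α) :=
  (isClosed_le (by fun_prop : Continuous fun x : ℝ × ℝ => |x.2|)
    (by fun_prop : Continuous fun x : ℝ × ℝ => x.1 * Real.tan (α / 2))).measurableSet

lemma geo1 {sn cs R p q : ℝ} (h : cs ^ 2 + sn ^ 2 = 1) (hs : 0 < sn) (hc : 0 < cs) (hR : 0 < R)
    (hH : 0 < sn * p - cs * q) (hr : R ^ 2 < p ^ 2 + q ^ 2) (hq : -(sn * R / 2) ≤ q) :
    |q| * cs ≤ p * sn := by
  rcases le_or_gt 0 q with h0 | h0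
  · rw [abs_of_nonneg h0]; linarith
  · rw [abs_of_neg h0]
    by_contra hcon
    push Not at hcon
    have h1 : (p * sn) ^ 2 < (-q * cs) ^ 2 := sq_lt_sq' (by linarith) hcon
    have h2 : q ^ 2 ≤ (sn * R / 2) ^ 2 := sq_le_sq' hq (by nlinarith)
    have h3 : R ^ 2 * sn ^ 2 < (p ^ 2 + q ^ 2) * sn ^ 2 := by gcongr
    have h4 : (p ^ 2 + q ^ 2) * sn ^ 2 < q ^ 2 := by
      have : q ^ 2 = q ^ 2 * cs ^ 2 + q ^ 2 * sn ^ 2 := by rw [← mul_add, h, mul_one]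
      nlinarith
    have h5 : 0 < (sn * R) ^ 2 := by positivity
    nlinarith

lemma geo3 {sn cs R p q : ℝ} (h : cs ^ 2 + sn ^ 2 = 1) (hs : 0 < sn) (hc : 0 < cs) (hR : 0 < R)
    (hS : |q| * cs ≤ p * sn) (hr : R ^ 2 < p ^ 2 + q ^ 2) (hq : q ≤ sn * R / 2) :
    sn * cs / 4 * R ≤ sn * p - cs * q := by
  have hp : 0 ≤ p := by
    have : 0 ≤ p * sn := le_trans (by positivity) hS
    exact nonneg_of_mul_nonneg_left this hs
  have hc1 : cs ≤ 1 := by nlinarith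
  have hs1 : sn ≤ 1 := by nlinarith
  rcases le_or_gt q 0 with h0 | h0
  · have h1 : (|q| * cs) ^ 2 ≤ (p * sn) ^ 2 := by gcongr
    rw [mul_pow, sq_abs] at h1
    have h3 : R ^ 2 * cs ^ 2 < (p ^ 2 + q ^ 2) * cs ^ 2 := by gcongr
    have h4 : (R * cs) ^ 2 ≤ p ^ 2 := by
      have : p ^ 2 = p ^ 2 * cs ^ 2 + p ^ 2 * sn ^ 2 := by rw [← mul_add, h, mul_one]
      nlinarith
    have h5 : R * cs ≤ p := le_of_sq_le_sq h4 hp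
    have h6 : sn * (R * cs) ≤ sn * p := by gcongr
    have h7 : cs * q ≤ 0 := by nlinarith
    have h8 : 0 < sn * (R * cs) := by positivity
    nlinarith
  · have h2 : q ^ 2 ≤ (sn * R / 2) ^ 2 := by gcongr
    have h3 : (sn * R / 2) ^ 2 ≤ (R / 2) ^ 2 := by
      gcongr
      nlinarith
    have h5 : 3 / 4 * R ≤ p := by
      refine le_of_sq_le_sq ?_ hp
      nlinarith
    have h6 : sn * (3 / 4 * R) ≤ sn * p := by gcongr
    have h7 : cs * q ≤ 1 * (sn * R / 2) := by gcongr
    have h8 : sn * cs / 4 * R ≤ sn * 1 / 4 * R := by gcongr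
    nlinarith

end MagWedge

namespace MagWedge
open scoped FourierTransform ContDiff

lemma trans_deriv_bound : ∃ M : ℝ, 0 < M ∧ ∀ y, |deriv Real.smoothTransition y| ≤ M := by
  have hc : Continuous (deriv Real.smoothTransition) :=
    (Real.smoothTransition.contDiff (n := 1)).continuous_deriv le_rfl
  obtain ⟨M, hM⟩ := (isCompact_Icc (a := (0 : ℝ)) (b := 1)).exists_bound_of_continuousOn
    hc.continuousOn
  refine ⟨|M| + 1, by positivity, fun y => ?_⟩
  by_cases hy : y ∈ Icc (0 : ℝ) 1
  · have := hM y hy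
    rw [Real.norm_eq_abs] at this
    linarith [le_abs_self M]
  · have hz : deriv Real.smoothTransition y = 0 := by
      rw [mem_Icc, not_and_or, not_le, not_le] at hy
      rcases hy with hy | hy
      · have : Real.smoothTransition =ᶠ[nhds y] fun _ => 0 := by
          filter_upwards [Iio_mem_nhds hy] with z hz
          exact Real.smoothTransition.zero_of_nonpos (le_of_lt hz)
        rw [this.deriv_eq]; simp
      · have : Real.smoothTransition =ᶠ[nhds y] fun _ => 1 := by
          filter_upwards [Ioi_mem_nhds hy] with z hz
          exact Real.smoothTransition.one_of_one_le (le_of_lt hz)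
        rw [this.deriv_eq]; simp
    rw [hz, abs_zero]; positivity

lemma exists_angle {ℓ : ℝ} : ∃ M : ℝ, 0 < M ∧ ∀ ℓ : ℝ, 0 < ℓ → ∃ θ : ℝ → ℝ,
    ContDiff ℝ (⊤ : ℕ∞) θ ∧ (∀ y ≤ -(ℓ / 2), Real.sin (θ y) = 0) ∧
    (∀ y, ℓ / 2 ≤ y → Real.cos (θ y) = 0) ∧ ∀ y, (deriv θ y) ^ 2 ≤ (M / ℓ) ^ 2 := by
  obtain ⟨M, hM, hb⟩ := trans_deriv_bound
  refine ⟨π / 2 * M, by positivity, fun ℓ hℓ => ?_⟩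
  refine ⟨fun y => π / 2 * Real.smoothTransition (y / ℓ + 1 / 2), ?_, ?_, ?_, ?_⟩
  · exact contDiff_const.mul (Real.smoothTransition.contDiff.comp (by fun_prop))
  · intro y hy
    have : y / ℓ + 1 / 2 ≤ 0 := by
      have : y / ℓ ≤ -(1 / 2) := by rw [div_le_iff₀ hℓ]; linarith
      linarith
    beta_reduce
    rw [Real.smoothTransition.zero_of_nonpos this]; simp
  · intro y hy
    have : 1 ≤ y / ℓ + 1 / 2 := by
      have : 1 / 2 ≤ y / ℓ := by rw [le_div_iff₀ hℓ]; linarith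
      linarith
    beta_reduce
    rw [Real.smoothTransition.one_of_one_le this]; simp
  · intro y
    have h1 : HasDerivAt Real.smoothTransition (deriv Real.smoothTransition (y / ℓ + 1 / 2))
        (y / ℓ + 1 / 2) :=
      ((Real.smoothTransition.contDiff (n := 1)).differentiable (by simp) _).hasDerivAt
    have h2 : HasDerivAt (fun y : ℝ => y / ℓ + 1 / 2) (1 / ℓ) y :=
      ((hasDerivAt_id y).div_const ℓ).add_const _
    have h3 := (h1.comp y h2).const_mul (π / 2)
    have h4 : deriv (fun y => π / 2 * Real.smoothTransition (y / ℓ + 1 / 2)) y = _ := h3.deriv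
    rw [h4]
    apply sq_le_sq.2
    rw [abs_mul, abs_mul, abs_of_pos (by positivity : 0 < π / 2),
      abs_of_pos (by positivity : 0 < 1 / ℓ), abs_of_pos (by positivity : 0 < π / 2 * M / ℓ)]
    have := hb (y / ℓ + 1 / 2)
    calc _ ≤ π / 2 * (M * (1 / ℓ)) := by gcongr
      _ = _ := by ring

lemma tsupport_mul_subset {u χ : ℝ × ℝ → ℂ} {A : Set (ℝ × ℝ)} (hA : IsClosed A)
    (h : ∀ x, x ∉ A → χ x = 0) : tsupport (fun x => χ x * u x) ⊆ A ∩ tsupport u := by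
  refine closure_minimal ?_ (hA.inter (isClosed_tsupport u))
  intro x hx
  have hx' : χ x * u x ≠ 0 := hx
  refine ⟨?_, ?_⟩
  · by_contra hc; exact hx' (by rw [h x hc, zero_mul])
  · exact subset_tsupport _ (right_ne_zero_of_mul hx')

lemma lower_bound (α γ τ ε : ℝ) (hα : α ∈ Ioo 0 π) (hγ : γ ∈ Icc 0 (π / 2)) (hε : 0 < ε) :
    ∃ R > 0, ∀ u : ℝ × ℝ → ℂ, Cc u →
      tsupport u ⊆ {x : ℝ × ℝ | R ^ 2 < x.1 ^ 2 + x.2 ^ 2} →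
      (Theta0 - ε) * norm2D (sector α) u ≤
        energy2D (sector α) (Real.sin γ * Real.cos (α / 2)) (Real.sin γ * Real.sin (α / 2))
          (Real.cos γ) τ u := by
  obtain ⟨M, hM, hang⟩ := exists_angle (ℓ := 0)
  have hc : 0 < Real.cos (α / 2) :=
    Real.cos_pos_of_mem_Ioo ⟨by linarith [hα.1, hα.2], by linarith [hα.2]⟩
  have hs : 0 < Real.sin (α / 2) :=
    Real.sin_pos_of_pos_of_lt_pi (by linarith [hα.1]) (by linarith [hα.1, hα.2])
  have hmem := fun x => mem_sector hα x
  have hcs : Real.cos (α / 2) ^ 2 + Real.sin (α / 2) ^ 2 = 1 := Real.cos_sq_add_sin_sq _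
  have hbk : Real.cos γ ^ 2 + Real.sin γ ^ 2 = 1 := Real.cos_sq_add_sin_sq _
  have hκ : 0 ≤ Real.sin γ := Real.sin_nonneg_of_nonneg_of_le_pi hγ.1 (by linarith [hγ.2, Real.pi_pos])
  set cs := Real.cos (α / 2)
  set sn := Real.sin (α / 2)
  set κ := Real.sin γ
  set b := Real.cos γ
  have hT := Theta0_nonneg
  -- choice of R
  obtain ⟨R, hR, hR1, hR2⟩ : ∃ R > 0, (M / (sn * R)) ^ 2 ≤ ε ∧
      (0 < κ → |τ| + Theta0 + 1 ≤ κ * (sn * cs / 4 * R)) := by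
    refine ⟨M / (sn * Real.sqrt ε) + (|τ| + Theta0 + 1) / (κ * (sn * cs / 4)) , ?_, ?_, ?_⟩
    · have : 0 ≤ (|τ| + Theta0 + 1) / (κ * (sn * cs / 4)) := by positivity
      have : 0 < M / (sn * Real.sqrt ε) := by positivity
      linarith
    · have h1 : 0 ≤ (|τ| + Theta0 + 1) / (κ * (sn * cs / 4)) := by positivity
      have h2 : 0 < M / (sn * Real.sqrt ε) := by positivity
      set X := (|τ| + Theta0 + 1) / (κ * (sn * cs / 4))
      have h4 : M / (sn * (M / (sn * Real.sqrt ε) + X)) ≤ Real.sqrt ε := by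
        rw [div_le_iff₀ (by positivity)]
        have : Real.sqrt ε * (sn * (M / (sn * Real.sqrt ε) + X))
          = M + Real.sqrt ε * sn * X := by field_simp
        rw [this]
        have : 0 ≤ Real.sqrt ε * sn * X := by positivity
        linarith
      calc _ ≤ (Real.sqrt ε) ^ 2 := by gcongr
        _ = ε := Real.sq_sqrt hε.le
    · intro hk
      have h2 : 0 < M / (sn * Real.sqrt ε) := by positivity
      have : κ * (sn * cs / 4 * (M / (sn * Real.sqrt ε) + (|τ| + Theta0 + 1) / (κ * (sn * cs / 4))))
        = κ * (sn * cs / 4) * (M / (sn * Real.sqrt ε)) + (|τ| + Theta0 + 1) := by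
        field_simp
      rw [this]
      have : 0 ≤ κ * (sn * cs / 4) * (M / (sn * Real.sqrt ε)) := by positivity
      linarith
  refine ⟨R, hR, fun u hu hsupp => ?_⟩
  obtain ⟨θ, hθ, hsin, hcos, hdθ⟩ := hang (sn * R) (by positivity)
  have hv1 : Cc (fun x => ((Real.sin (θ x.2) : ℝ) : ℂ) * u x) :=
    hu.mul (Complex.ofRealCLM.contDiff.comp (Real.contDiff_sin.comp (hθ.comp contDiff_snd)))
  have hv2 : Cc (fun x => ((Real.cos (θ x.2) : ℝ) : ℂ) * u x) :=
    hu.mul (Complex.ofRealCLM.contDiff.comp (Real.contDiff_cos.comp (hθ.comp contDiff_snd)))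
  have ht1 := tsupport_mul_subset (u := u) (χ := fun x => ((Real.sin (θ x.2) : ℝ) : ℂ))
    (A := {x : ℝ × ℝ | -(sn * R / 2) ≤ x.2}) (isClosed_le (by fun_prop) (by fun_prop)) (by
      intro x hx
      have : x.2 ≤ -(sn * R / 2) := le_of_not_ge hx
      simp only [hsin _ this, Complex.ofReal_zero])
  have ht2 := tsupport_mul_subset (u := u) (χ := fun x => ((Real.cos (θ x.2) : ℝ) : ℂ))
    (A := {x : ℝ × ℝ | x.2 ≤ sn * R / 2}) (isClosed_le (by fun_prop) (by fun_prop)) (by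
      intro x hx
      have : sn * R / 2 ≤ x.2 := le_of_not_ge hx
      simp only [hcos _ this, Complex.ofReal_zero])
  set v1 : ℝ × ℝ → ℂ := fun x => ((Real.sin (θ x.2) : ℝ) : ℂ) * u x with hv1def
  set v2 : ℝ × ℝ → ℂ := fun x => ((Real.cos (θ x.2) : ℝ) : ℂ) * u x with hv2def
  have hSm := measurableSet_sector α
  -- upper piece
  have p1 : Theta0 * norm2D (sector α) v1 ≤ energy2D (sector α) (κ * cs) (κ * sn) b τ v1 := by
    refine piece hv1 hcs hSm ?_ ?_ τ hbk
    · intro x hx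
      rw [hmem] at hx
      have := mul_le_mul_of_nonneg_right (le_abs_self x.2) hc.le
      linarith
    · intro x hx hH
      have hx' := ht1 hx
      rw [hmem]
      exact geo1 hcs hs hc hR hH (hsupp hx'.2) hx'.1
  -- lower piece
  have p2 : Theta0 * norm2D (sector α) v2 ≤ energy2D (sector α) (κ * cs) (κ * sn) b τ v2 := by
    rcases hκ.eq_or_lt with hk | hk
    · have hcs' : (-cs) ^ 2 + sn ^ 2 = 1 := by rw [neg_sq]; exact hcs
      have := piece (v := v2) (b := b) (κ := κ) (c := -cs) (σ := sn) hv2 hcs' hSm ?_ ?_ τ hbk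
      · rw [← hk] at this ⊢
        simpa using this
      · intro x hx
        rw [hmem] at hx
        have := mul_le_mul_of_nonneg_right (neg_abs_le x.2) hc.le
        linarith
      · intro x hx hH
        have hx' := ht2 hx
        rw [hmem, ← abs_neg]
        refine geo1 hcs hs hc hR (by linarith) ?_ ?_ (p := x.1) (q := -x.2)
        · rw [neg_sq]; exact hsupp hx'.2
        · exact neg_le_neg hx'.1
    · rw [norm2D, energy2D_eq, ← integral_const_mul]
      refine setIntegral_mono_on (hv2.integrable_sq.const_mul _).integrableOn
        (dens_integrable _ _ _ _ hv2).integrableOn hSm ?_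
      intro x hx
      by_cases hxs : x ∈ tsupport v2
      · have hx' := ht2 hxs
        rw [hmem] at hx
        have h3 := geo3 hcs hs hc hR hx (hsupp hx'.2) hx'.1
        have h4 : κ * (sn * cs / 4 * R) ≤ κ * (sn * x.1 - cs * x.2) := by gcongr
        have h5 : Theta0 + 1 ≤ x.1 * (κ * sn) - x.2 * (κ * cs) - τ := by
          have := hR2 hk
          have := le_abs_self τ
          linarith
        have h6 : Theta0 ≤ (x.1 * (κ * sn) - x.2 * (κ * cs) - τ) ^ 2 := by nlinarith
        unfold dens
        have h7 := mul_le_mul_of_nonneg_right h6 (sq_nonneg ‖v2 x‖)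
        have h8 := sq_nonneg ‖(-Complex.I) * fderiv ℝ v2 x (1, 0) + ((x.2 * b : ℝ) : ℂ) * v2 x‖
        have h9 := sq_nonneg ‖fderiv ℝ v2 x (0, 1)‖
        linarith
      · rw [image_eq_zero_of_notMem_tsupport hxs]
        simpa using dens_nonneg _ _ _ _ _ _
  have hsum : energy2D (sector α) (κ * cs) (κ * sn) b τ v1
      + energy2D (sector α) (κ * cs) (κ * sn) b τ v2
      ≤ energy2D (sector α) (κ * cs) (κ * sn) b τ u + ε * norm2D (sector α) u := by
    simp only [energy2D_eq, norm2D]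
    rw [← integral_const_mul, ← integral_add (dens_integrable _ _ _ _ hv1).integrableOn
      (dens_integrable _ _ _ _ hv2).integrableOn,
      ← integral_add (dens_integrable _ _ _ _ hu).integrableOn
      (hu.integrable_sq.const_mul _).integrableOn]
    refine integral_mono ((dens_integrable _ _ _ _ hv1).integrableOn.add
      (dens_integrable _ _ _ _ hv2).integrableOn)
      ((dens_integrable _ _ _ _ hu).integrableOn.add
      (hu.integrable_sq.const_mul _).integrableOn) fun x => ?_
    have := ims (κ * cs) (κ * sn) b τ hu hθ x
    simp only [Pi.add_apply]
    rw [← hv1def, ← hv2def] at this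
    rw [this]
    gcongr
    exact (hdθ _).trans hR1
  have hnorm : norm2D (sector α) u = norm2D (sector α) v1 + norm2D (sector α) v2 := by
    simp only [norm2D]
    rw [← integral_add hv1.integrable_sq.integrableOn hv2.integrable_sq.integrableOn]
    congr 1; ext x
    simp only [hv1def, hv2def, norm_mul, mul_pow, Complex.norm_real, Real.norm_eq_abs, sq_abs]
    rw [← add_mul, Real.sin_sq_add_cos_sq, one_mul]
  have : Theta0 * norm2D (sector α) u = Theta0 * norm2D (sector α) v1
    + Theta0 * norm2D (sector α) v2 := by rw [hnorm]; ring
  linarith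

end MagWedge

namespace MagWedge
open scoped FourierTransform ContDiff

lemma norm2D_pos {α : ℝ} (hα : α ∈ Set.Ioo 0 π) {u : ℝ × ℝ → ℂ} (hu : Cc u) (h : u (1, 0) ≠ 0) :
    0 < norm2D (sector α) u := by
  have hc := hu.1.continuous
  have hs : 0 < Real.sin (α / 2) := Real.sin_pos_of_pos_of_lt_pi (by linarith [hα.1]) (by linarith [hα.1, hα.2])
  unfold norm2D
  rw [setIntegral_pos_iff_support_of_nonneg_ae]
  · have ho : IsOpen ({x : ℝ × ℝ | u x ≠ 0} ∩ {x : ℝ × ℝ | |x.2| * Real.cos (α / 2) < x.1 * Real.sin (α / 2)}) := by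
      refine IsOpen.inter (isOpen_ne_fun hc continuous_const) (isOpen_lt (by fun_prop) (by fun_prop))
    refine lt_of_lt_of_le (ho.measure_pos volume ⟨(1, 0), h, ?_⟩) (measure_mono ?_)
    · simpa using hs
    · rintro x ⟨hx1, hx2⟩
      refine ⟨?_, (mem_sector hα x).2 (le_of_lt hx2)⟩
      have : ‖u x‖ ≠ 0 := norm_ne_zero_iff.2 hx1
      exact pow_ne_zero 2 this
  · exact Eventually.of_forall fun x => by positivity
  · exact hu.integrable_sq.integrableOn

lemma exists_bump : ∃ v : ℝ × ℝ → ℂ, Cc v ∧ v (1, 0) ≠ 0 ∧ ∀ x : ℝ × ℝ, x.2 < -1 ∨ x.1 < 0 → v x = 0 := by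
  let f : ContDiffBump ((1, 0) : ℝ × ℝ) := ⟨1 / 2, 1, by norm_num, by norm_num⟩
  refine ⟨fun x => ((f x : ℝ) : ℂ), ⟨Complex.ofRealCLM.contDiff.comp f.contDiff, ?_⟩, ?_, ?_⟩
  · exact f.hasCompactSupport.comp_left (g := fun r : ℝ => (r : ℂ)) (by simp)
  · have : f (1, 0) = 1 := f.one_of_mem_closedBall (by simp [f])
    beta_reduce; rw [this]; simp
  · intro x hx
    have : f x = 0 := by
      apply f.zero_of_le_dist
      show 1 ≤ dist x (1, 0)
      rw [Prod.dist_eq, le_max_iff]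
      rcases hx with hx | hx
      · right; rw [Real.dist_eq, le_abs]; right; simp only; linarith
      · left; rw [Real.dist_eq, le_abs]; right; simp only; linarith
    beta_reduce; rw [this]; simp

lemma dens_shift (b1 b2 b3 τ p q : ℝ) (hpq : p * b2 - q * b1 = 0) {v : ℝ × ℝ → ℂ} (hv : Cc v) (x : ℝ × ℝ) :
    dens b1 b2 b3 τ (fun x => Complex.exp (((-(q * b3 * x.1) : ℝ) : ℂ) * Complex.I) * v (x - (p, q))) x
      = dens b1 b2 b3 τ v (x - (p, q)) := by
  obtain ⟨s, t⟩ := x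
  have hvd : Differentiable ℝ v := hv.1.differentiable (by simp)
  have hph : ContDiff ℝ (⊤ : ℕ∞) (fun x : ℝ × ℝ => Complex.exp (((-(q * b3 * x.1) : ℝ) : ℂ) * Complex.I)) := by
    refine Complex.contDiff_exp.comp (ContDiff.mul (Complex.ofRealCLM.contDiff.comp
      (by fun_prop : ContDiff ℝ (⊤ : ℕ∞) fun x : ℝ × ℝ => (-(q * b3 * x.1)))) contDiff_const)
  have hsh : ContDiff ℝ (⊤ : ℕ∞) (fun x : ℝ × ℝ => v (x - (p, q))) :=
    hv.1.comp (by fun_prop)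
  have hu : Differentiable ℝ (fun x : ℝ × ℝ => Complex.exp (((-(q * b3 * x.1) : ℝ) : ℂ) * Complex.I) * v (x - (p, q))) :=
    (hph.mul hsh).differentiable (by simp)
  have hv' : HasFDerivAt v (fderiv ℝ v (s - p, t - q)) (s - p, t - q) := (hvd _).hasFDerivAt
  have l1 : HasDerivAt (fun s : ℝ => (s - p, t - q)) ((1 : ℝ), (0 : ℝ)) s :=
    ((hasDerivAt_id s).sub_const p).prodMk (hasDerivAt_const s _)
  have l2 : HasDerivAt (fun t : ℝ => (s - p, t - q)) ((0 : ℝ), (1 : ℝ)) t :=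
    (hasDerivAt_const t _).prodMk ((hasDerivAt_id t).sub_const q)
  have e0 : HasDerivAt (fun s : ℝ => ((-(q * b3 * s) : ℝ) : ℂ) * Complex.I) (((-(q * b3) : ℝ) : ℂ) * Complex.I) s := by
    have : HasDerivAt (fun s : ℝ => -(q * b3 * s)) (-(q * b3)) s := by
      exact (((hasDerivAt_id s).const_mul (q * b3)).neg).congr_deriv (by simp)
    exact this.ofReal_comp.mul_const _
  have d1 := fderiv_fst hu (e0.cexp.mul (hv'.comp_hasDerivAt s l1))
  have d2 := fderiv_snd hu ((hv'.comp_hasDerivAt t l2).const_mul (Complex.exp (((-(q * b3 * s) : ℝ) : ℂ) * Complex.I)))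
  unfold dens
  rw [d1, d2]
  simp only [Prod.mk_sub_mk, Function.comp]
  have hn := norm_e (-(q * b3 * s))
  have a1 : ∀ E P V : ℂ, -Complex.I * (E * (((-(q * b3) : ℝ) : ℂ) * Complex.I) * V + E * P)
      + ((t * b3 : ℝ) : ℂ) * (E * V) = E * (-Complex.I * P + (((t - q) * b3 : ℝ) : ℂ) * V) := by
    intro E P V
    push_cast
    linear_combination (E * q * b3 * V) * Complex.I_mul_I
  rw [a1]
  simp only [norm_mul, hn, one_mul]
  congr 3
  linear_combination hpq

lemma sector_shift {α : ℝ} (hα : α ∈ Set.Ioo 0 π) {L : ℝ} (hL : 0 ≤ L) {x : ℝ × ℝ} (hx : x ∈ sector α) :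
    x + (L * Real.cos (α / 2), L * Real.sin (α / 2)) ∈ sector α := by
  have hs : 0 < Real.sin (α / 2) := Real.sin_pos_of_pos_of_lt_pi (by linarith [hα.1]) (by linarith [hα.1, hα.2])
  have hc : 0 < Real.cos (α / 2) := Real.cos_pos_of_mem_Ioo ⟨by linarith [hα.1, Real.pi_pos], by linarith [hα.2]⟩
  rw [mem_sector hα] at hx ⊢
  simp only [Prod.fst_add, Prod.snd_add]
  have h1 : |x.2 + L * Real.sin (α / 2)| ≤ |x.2| + L * Real.sin (α / 2) :=
    (abs_add_le _ _).trans (by rw [abs_of_nonneg (mul_nonneg hL hs.le)])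
  nlinarith [mul_le_mul_of_nonneg_right h1 hc.le]

lemma far_test (α γ τ : ℝ) (hα : α ∈ Set.Ioo 0 π) : ∃ C : ℝ, ∀ R > 0, ∃ u : ℝ × ℝ → ℂ, Cc u ∧
    tsupport u ⊆ {x : ℝ × ℝ | R ^ 2 < x.1 ^ 2 + x.2 ^ 2} ∧ 0 < norm2D (sector α) u ∧
    energy2D (sector α) (Real.sin γ * Real.cos (α / 2)) (Real.sin γ * Real.sin (α / 2))
      (Real.cos γ) τ u / norm2D (sector α) u ≤ C := by
  obtain ⟨v, hv, hv1, hv0⟩ := exists_bump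
  have hs : 0 < Real.sin (α / 2) := Real.sin_pos_of_pos_of_lt_pi (by linarith [hα.1]) (by linarith [hα.1, hα.2])
  have hc : 0 < Real.cos (α / 2) := Real.cos_pos_of_mem_Ioo ⟨by linarith [hα.1, Real.pi_pos], by linarith [hα.2]⟩
  have hvp := norm2D_pos hα hv hv1
  set b1 := Real.sin γ * Real.cos (α / 2) with hb1
  set b2 := Real.sin γ * Real.sin (α / 2) with hb2
  refine ⟨(∫ x, dens b1 b2 (Real.cos γ) τ v x) / norm2D (sector α) v, fun R hR => ?_⟩
  set p := (R + 2) * Real.cos (α / 2) with hp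
  set q := (R + 2) * Real.sin (α / 2) with hq
  have hpq : p * b2 - q * b1 = 0 := by rw [hp, hq, hb1, hb2]; ring
  have hph : ContDiff ℝ (⊤ : ℕ∞) (fun x : ℝ × ℝ => Complex.exp (((-(q * Real.cos γ * x.1) : ℝ) : ℂ) * Complex.I)) := by
    refine Complex.contDiff_exp.comp (ContDiff.mul (Complex.ofRealCLM.contDiff.comp
      (by fun_prop : ContDiff ℝ (⊤ : ℕ∞) fun x : ℝ × ℝ => (-(q * Real.cos γ * x.1)))) contDiff_const)
  have hsh : Cc (fun x : ℝ × ℝ => v (x - (p, q))) :=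
    ⟨hv.1.comp (by fun_prop), hv.2.comp_homeomorph (Homeomorph.subRight (p, q))⟩
  have hu := hsh.mul hph
  set u : ℝ × ℝ → ℂ := fun x => Complex.exp (((-(q * Real.cos γ * x.1) : ℝ) : ℂ) * Complex.I) * v (x - (p, q)) with hudef
  have hd : ∀ x, dens b1 b2 (Real.cos γ) τ u x = dens b1 b2 (Real.cos γ) τ v (x - (p, q)) :=
    fun x => dens_shift b1 b2 (Real.cos γ) τ p q hpq hv x
  have hE : energy2D (sector α) b1 b2 (Real.cos γ) τ u ≤ ∫ x, dens b1 b2 (Real.cos γ) τ v x := by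
    rw [energy2D_eq]
    refine (setIntegral_le_integral (dens_integrable b1 b2 (Real.cos γ) τ hu)
      (Eventually.of_forall fun x => dens_nonneg _ _ _ _ _ _)).trans (le_of_eq ?_)
    simp only [hd]
    exact integral_sub_right_eq_self _ (p, q)
  have hN : norm2D (sector α) v ≤ norm2D (sector α) u := by
    unfold norm2D
    have e1 : ∀ x, ‖u x‖ ^ 2 = ‖v (x - (p, q))‖ ^ 2 := fun x => by
      rw [hudef]; simp only [norm_mul, norm_e, one_mul]
    have hm := measurableSet_sector α
    rw [← integral_indicator hm, ← integral_indicator hm,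
      ← integral_sub_right_eq_self ((sector α).indicator fun x => ‖v x‖ ^ 2) (p, q)]
    refine integral_mono ?_ ?_ ?_
    · exact (hv.integrable_sq.indicator hm).comp_sub_right (p, q)
    · exact hu.integrable_sq.indicator hm
    · intro x
      by_cases hx : x - (p, q) ∈ sector α
      · have h2 : x ∈ sector α := by
          have := sector_shift hα (by linarith : 0 ≤ R + 2) hx
          rwa [← hp, ← hq, sub_add_cancel] at this
        simp only [indicator_of_mem hx, indicator_of_mem h2, e1]; exact le_rfl
      · simp only [indicator_of_notMem hx]
        exact indicator_nonneg (fun x _ => by positivity) x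
  refine ⟨u, hu, ?_, hvp.trans_le hN, ?_⟩
  · have hcl : IsClosed {x : ℝ × ℝ | p ≤ x.1 ∧ q - 1 ≤ x.2} :=
      (isClosed_le continuous_const continuous_fst).inter (isClosed_le continuous_const continuous_snd)
    refine (closure_minimal ?_ hcl).trans ?_
    · intro x hx
      by_contra hcon
      have : v (x - (p, q)) = 0 := by
        apply hv0
        simp only [mem_ofPred_eq, not_and_or, not_le] at hcon
        simp only [Prod.fst_sub, Prod.snd_sub]
        rcases hcon with h | h
        · right; linarith
        · left; linarith
      exact hx (by rw [hudef]; simp only [this, mul_zero])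
    · rintro x ⟨hx1, hx2⟩
      simp only [mem_ofPred_eq]
      have hsc := Real.sin_sq_add_cos_sq (α / 2)
      have hs1 := Real.sin_le_one (α / 2)
      have h1 : R + 1 ≤ x.1 * Real.cos (α / 2) + x.2 * Real.sin (α / 2) := by
        have a := mul_le_mul_of_nonneg_right hx1 hc.le
        have b := mul_le_mul_of_nonneg_right hx2 hs.le
        have e : p * Real.cos (α / 2) + (q - 1) * Real.sin (α / 2) = R + 2 - Real.sin (α / 2) := by
          rw [hp, hq]; linear_combination (R + 2) * hsc
        linarith
      have h2 : x.1 ^ 2 + x.2 ^ 2 = (x.1 * Real.cos (α / 2) + x.2 * Real.sin (α / 2)) ^ 2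
          + (x.1 * Real.sin (α / 2) - x.2 * Real.cos (α / 2)) ^ 2 := by
        linear_combination -(x.1 ^ 2 + x.2 ^ 2) * hsc
      rw [h2]
      nlinarith [sq_nonneg (x.1 * Real.sin (α / 2) - x.2 * Real.cos (α / 2))]
  · exact div_le_div₀ (integral_nonneg fun x => dens_nonneg _ _ _ _ _ _) hE hvp hN

lemma sEss_ge (α γ τ : ℝ) (hα : α ∈ Set.Ioo 0 π) (hγ : γ ∈ Set.Icc 0 (π / 2)) {ε : ℝ} (hε : 0 < ε) :
    Theta0 - ε ≤ sEss α (Real.sin γ * Real.cos (α / 2)) (Real.sin γ * Real.sin (α / 2))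
      (Real.cos γ) τ := by
  obtain ⟨C, hC⟩ := far_test α γ τ hα
  obtain ⟨R, hR, hlow⟩ := lower_bound α γ τ ε hα hγ hε
  have hbdd : BddAbove { r : ℝ | ∃ R > (0 : ℝ), r = SigmaR α (Real.sin γ * Real.cos (α / 2))
      (Real.sin γ * Real.sin (α / 2)) (Real.cos γ) τ R } := by
    refine ⟨C, ?_⟩
    rintro r ⟨R, hR, rfl⟩
    obtain ⟨u, hu, ht, hn, hq⟩ := hC R hR
    refine (csInf_le ⟨0, ?_⟩ ?_).trans hq
    · rintro r ⟨w, -, -, -, h, rfl⟩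
      exact div_nonneg (integral_nonneg fun x => dens_nonneg _ _ _ _ _ _) h.le
    · exact ⟨u, hu.1, hu.2, ht, hn, rfl⟩
  refine le_trans ?_ (le_csSup hbdd ⟨R, hR, rfl⟩)
  obtain ⟨u, hu, ht, hn, hq⟩ := hC R hR
  refine le_csInf ⟨_, u, hu.1, hu.2, ht, hn, rfl⟩ ?_
  rintro r ⟨w, hw1, hw2, hwt, hwn, rfl⟩
  rw [le_div_iff₀ hwn]
  exact hlow w ⟨hw1, hw2⟩ hwt

end MagWedge

namespace MagWedge
open scoped FourierTransform ContDiff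

lemma polar_mem {α : ℝ} (hα : α ∈ Set.Ioo 0 π) {r θ : ℝ} (hr : 0 < r) (hθ : θ ∈ Ioo (-π) π) :
    (r * Real.cos θ, r * Real.sin θ) ∈ sector α ↔ θ ∈ Icc (-(α / 2)) (α / 2) := by
  rw [mem_sector hα, mem_Icc, ← abs_le]
  have hab : |θ| < π := abs_lt.2 hθ
  have h0 := abs_nonneg θ
  have h1 : |Real.sin θ| = Real.sin |θ| := by
    rcases le_total 0 θ with h | h
    · rw [abs_of_nonneg h, abs_of_nonneg (Real.sin_nonneg_of_nonneg_of_le_pi h hθ.2.le)]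
    · rw [abs_of_nonpos h, Real.sin_neg,
        abs_of_nonpos (Real.sin_nonpos_of_nonpos_of_neg_pi_le h hθ.1.le)]
  have h2 : Real.cos θ = Real.cos |θ| := (Real.cos_abs θ).symm
  simp only
  rw [abs_mul, abs_of_pos hr, h1, h2]
  have h3 : r * Real.sin |θ| * Real.cos (α / 2) ≤ r * Real.cos |θ| * Real.sin (α / 2) ↔
      Real.sin (|θ| - α / 2) ≤ 0 := by
    rw [Real.sin_sub, sub_nonpos, mul_assoc, mul_assoc, mul_le_mul_iff_right₀ hr]
  rw [h3]
  constructor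
  · intro h
    by_contra hc
    push Not at hc
    exact absurd (Real.sin_pos_of_pos_of_lt_pi (by linarith) (by linarith [hα.1])) (not_lt.2 h)
  · intro h
    exact Real.sin_nonpos_of_nonpos_of_neg_pi_le (by linarith) (by linarith [hα.2])

lemma polarS {α : ℝ} (hα : α ∈ Set.Ioo 0 π) (f : ℝ × ℝ → ℝ) (φ h : ℝ → ℝ)
    (hf : ∀ r θ : ℝ, 0 < r → f (r * Real.cos θ, r * Real.sin θ) = φ r * h θ) :
    ∫ x in sector α, f x = (∫ r in Ioi (0 : ℝ), r * φ r) * ∫ θ in (-(α / 2))..(α / 2), h θ := by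
  rw [← integral_indicator (measurableSet_sector α), ← integral_comp_polarCoord_symm,
    intervalIntegral.integral_of_le (by linarith [hα.1]), ← integral_Icc_eq_integral_Ioc,
    ← setIntegral_prod_mul, polarCoord_target, ← Measure.volume_eq_prod]
  have hsub : Icc (-(α / 2)) (α / 2) ⊆ Ioo (-π) π := fun θ hθ =>
    ⟨by linarith [hθ.1, hα.2, Real.pi_pos], by linarith [hθ.2, hα.2, Real.pi_pos]⟩
  have e : ∫ p in Ioi (0 : ℝ) ×ˢ Ioo (-π) π, p.1 • (sector α).indicator f (polarCoord.symm p)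
      = ∫ p in Ioi (0 : ℝ) ×ˢ Ioo (-π) π,
        (Ioi (0 : ℝ) ×ˢ Icc (-(α / 2)) (α / 2)).indicator (fun z => z.1 * φ z.1 * h z.2) p := by
    refine setIntegral_congr_fun (measurableSet_Ioi.prod measurableSet_Ioo) ?_
    rintro ⟨r, θ⟩ ⟨hr, hθ⟩
    have hr' : 0 < r := hr
    simp only [polarCoord_symm_apply]
    by_cases hm : θ ∈ Icc (-(α / 2)) (α / 2)
    · rw [indicator_of_mem ((polar_mem hα hr' hθ).2 hm), indicator_of_mem (show ((r, θ) : ℝ × ℝ) ∈ Ioi (0 : ℝ) ×ˢ Icc (-(α / 2)) (α / 2) from ⟨hr, hm⟩),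
        hf r θ hr',
        smul_eq_mul, mul_assoc]
    · rw [indicator_of_notMem (fun hc => hm ((polar_mem hα hr' hθ).1 hc)),
        indicator_of_notMem (fun hc => hm hc.2), smul_zero]
  rw [e, setIntegral_indicator (measurableSet_Ioi.prod measurableSet_Icc)]
  congr 2
  ext ⟨r, θ⟩
  simp only [mem_inter_iff, mem_prod]
  exact ⟨fun h => h.2, fun h => ⟨⟨h.1, hsub h.2⟩, h⟩⟩

lemma radial1 {ρ : ℝ} (hρ : 0 < ρ) :
    ∫ r in Ioi (0 : ℝ), r * Real.exp (-ρ * r ^ 2) = 1 / (2 * ρ) := by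
  have := integral_rpow_mul_exp_neg_mul_rpow (p := 2) (q := 1) (b := ρ) (by norm_num) (by norm_num) hρ
  norm_num at this
  rw [Real.rpow_neg_one] at this
  simp only [neg_mul]
  rw [this]; field_simp

lemma radial3 {ρ : ℝ} (hρ : 0 < ρ) :
    ∫ r in Ioi (0 : ℝ), r * (r ^ 2 * Real.exp (-ρ * r ^ 2)) = 1 / (2 * ρ ^ 2) := by
  have := integral_rpow_mul_exp_neg_mul_rpow (p := 2) (q := 3) (b := ρ) (by norm_num) (by norm_num) hρ
  norm_num at this
  have e : ∀ r : ℝ, r * (r ^ 2 * Real.exp (-ρ * r ^ 2)) = r ^ 3 * Real.exp (-(ρ * r ^ 2)) := by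
    intro r; rw [neg_mul]; ring
  simp only [e]
  rw [this]
  field_simp

/-- cut-off profile -/
def prof (ρ : ℝ) (n : ℕ) (s : ℝ) : ℝ :=
  Real.smoothTransition (2 - s / (n + 1)) * Real.exp (-(ρ / 2) * s)

def prof' (ρ : ℝ) (n : ℕ) (s : ℝ) : ℝ :=
  (-(deriv Real.smoothTransition (2 - s / (n + 1)) / (n + 1))
    - ρ / 2 * Real.smoothTransition (2 - s / (n + 1))) * Real.exp (-(ρ / 2) * s)

lemma prof_contDiff (ρ : ℝ) (n : ℕ) : ContDiff ℝ (⊤ : ℕ∞) (prof ρ n) := by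
  unfold prof
  exact (Real.smoothTransition.contDiff.comp (by fun_prop)).mul (by fun_prop)

lemma prof_deriv (ρ : ℝ) (n : ℕ) (s : ℝ) : HasDerivAt (prof ρ n) (prof' ρ n s) s := by
  have h1 : HasDerivAt Real.smoothTransition (deriv Real.smoothTransition (2 - s / (n + 1)))
      (2 - s / (n + 1)) :=
    ((Real.smoothTransition.contDiff (n := 1)).differentiable (by simp) _).hasDerivAt
  have h2 : HasDerivAt (fun s : ℝ => 2 - s / ((n : ℝ) + 1)) (-(1 / ((n : ℝ) + 1))) s :=
    ((hasDerivAt_id s).div_const _).const_sub _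
  have h3 : HasDerivAt (fun s : ℝ => -(ρ / 2) * s) (-(ρ / 2)) s :=
    ((hasDerivAt_id s).const_mul (-(ρ / 2))).congr_deriv (by simp)
  refine ((h1.comp s h2).mul h3.exp).congr_deriv ?_
  unfold prof'
  simp only [Function.comp]
  ring

/-- test functions -/
def tf (ρ : ℝ) (n : ℕ) (x : ℝ × ℝ) : ℂ := ((prof ρ n (x.1 ^ 2 + x.2 ^ 2) : ℝ) : ℂ)

lemma tf_Cc (ρ : ℝ) (n : ℕ) : Cc (tf ρ n) := by
  refine ⟨Complex.ofRealCLM.contDiff.comp ((prof_contDiff ρ n).comp (by fun_prop)), ?_⟩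
  have hn : (0 : ℝ) < n + 1 := by positivity
  refine HasCompactSupport.intro (K := Icc (-(2 * ((n : ℝ) + 1) + 1)) (2 * (n + 1) + 1) ×ˢ
    Icc (-(2 * ((n : ℝ) + 1) + 1)) (2 * (n + 1) + 1)) (isCompact_Icc.prod isCompact_Icc) ?_
  intro x hx
  have hbig : 2 * ((n : ℝ) + 1) ≤ x.1 ^ 2 + x.2 ^ 2 := by
    by_contra hc
    push Not at hc
    apply hx
    have g1 : x.1 ^ 2 ≤ (2 * ((n : ℝ) + 1) + 1) ^ 2 := by nlinarith [sq_nonneg x.2]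
    have g2 : x.2 ^ 2 ≤ (2 * ((n : ℝ) + 1) + 1) ^ 2 := by nlinarith [sq_nonneg x.1]
    exact ⟨abs_le.1 (abs_le_of_sq_le_sq g1 (by positivity)),
      abs_le.1 (abs_le_of_sq_le_sq g2 (by positivity))⟩
  have : 2 - (x.1 ^ 2 + x.2 ^ 2) / ((n : ℝ) + 1) ≤ 0 := by
    rw [sub_nonpos, le_div_iff₀ hn]; exact hbig
  unfold tf prof
  rw [Real.smoothTransition.zero_of_nonpos this]; simp

lemma tf_dens (b1 b2 b3 ρ : ℝ) (n : ℕ) (x : ℝ × ℝ) :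
    dens b1 b2 b3 0 (tf ρ n) x = 4 * (x.1 ^ 2 + x.2 ^ 2) * prof' ρ n (x.1 ^ 2 + x.2 ^ 2) ^ 2
      + (b3 ^ 2 * x.2 ^ 2 + (x.1 * b2 - x.2 * b1) ^ 2) * prof ρ n (x.1 ^ 2 + x.2 ^ 2) ^ 2 := by
  obtain ⟨s, t⟩ := x
  have hu : Differentiable ℝ (tf ρ n) := (tf_Cc ρ n).1.differentiable (by simp)
  have l1 : HasDerivAt (fun s : ℝ => s ^ 2 + t ^ 2) (2 * s) s :=
    ((hasDerivAt_pow 2 s).add_const _).congr_deriv (by simp)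
  have l2 : HasDerivAt (fun t : ℝ => s ^ 2 + t ^ 2) (2 * t) t :=
    ((hasDerivAt_pow 2 t).const_add _).congr_deriv (by simp)
  have c1 : HasDerivAt (fun s : ℝ => tf ρ n (s, t)) ((prof' ρ n (s ^ 2 + t ^ 2) * (2 * s) : ℝ) : ℂ) s := by
    have k := HasDerivAt.comp s (prof_deriv ρ n (s ^ 2 + t ^ 2)) l1
    exact k.ofReal_comp
  have d1 := fderiv_fst hu c1
  have c2 : HasDerivAt (fun t : ℝ => tf ρ n (s, t)) ((prof' ρ n (s ^ 2 + t ^ 2) * (2 * t) : ℝ) : ℂ) t := by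
    have k := HasDerivAt.comp t (prof_deriv ρ n (s ^ 2 + t ^ 2)) l2
    exact k.ofReal_comp
  have d2 := fderiv_snd hu c2
  unfold dens
  rw [d1, d2]
  unfold tf
  simp only [Complex.sq_norm, Complex.normSq_apply, Complex.add_re, Complex.add_im,
    Complex.mul_re, Complex.mul_im, Complex.ofReal_re, Complex.neg_re, Complex.neg_im,
    Complex.I_re, Complex.I_im, Complex.ofReal_im]
  ring

lemma tf_norm (ρ : ℝ) (n : ℕ) (x : ℝ × ℝ) : ‖tf ρ n x‖ ^ 2 = prof ρ n (x.1 ^ 2 + x.2 ^ 2) ^ 2 := by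
  unfold tf
  rw [Complex.norm_real, Real.norm_eq_abs, sq_abs]

lemma st_tendsto (s : ℝ) : Tendsto (fun n : ℕ => Real.smoothTransition (2 - s / ((n : ℝ) + 1))) atTop (nhds 1) := by
  have h : Tendsto (fun n : ℕ => 2 - s / ((n : ℝ) + 1)) atTop (nhds 2) := by
    have := (tendsto_one_div_add_atTop_nhds_zero_nat (𝕜 := ℝ)).const_mul s
    have := this.const_sub 2
    simpa [div_eq_mul_inv] using this
  have h2 := (Real.smoothTransition.continuous.tendsto 2).comp h
  rwa [Real.smoothTransition.one_of_one_le (by norm_num : (1 : ℝ) ≤ 2)] at h2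

lemma dst_tendsto (s : ℝ) : Tendsto (fun n : ℕ => deriv Real.smoothTransition (2 - s / ((n : ℝ) + 1)) / ((n : ℝ) + 1)) atTop (nhds 0) := by
  obtain ⟨M, hM, hb⟩ := trans_deriv_bound
  have h := (tendsto_one_div_add_atTop_nhds_zero_nat (𝕜 := ℝ)).const_mul M
  rw [mul_zero] at h
  refine squeeze_zero_norm (fun n => ?_) h
  have hn : (0 : ℝ) < n + 1 := by positivity
  rw [Real.norm_eq_abs, abs_div, abs_of_pos hn, mul_one_div]
  gcongr
  exact hb _

lemma exp_sq (ρ s : ℝ) : Real.exp (-(ρ / 2) * s) ^ 2 = Real.exp (-ρ * s) := by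
  rw [← Real.exp_nat_mul]; congr 1; push_cast; ring

lemma prof_tendsto (ρ s : ℝ) :
    Tendsto (fun n => prof ρ n s ^ 2) atTop (nhds (Real.exp (-ρ * s))) := by
  have := ((st_tendsto s).mul_const (Real.exp (-(ρ / 2) * s))).pow 2
  rwa [one_mul, exp_sq] at this

lemma prof'_tendsto (ρ s : ℝ) :
    Tendsto (fun n => prof' ρ n s ^ 2) atTop (nhds (ρ ^ 2 / 4 * Real.exp (-ρ * s))) := by
  have := ((((dst_tendsto s).neg.sub ((st_tendsto s).const_mul (ρ / 2)))).mul_const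
    (Real.exp (-(ρ / 2) * s))).pow 2
  refine this.trans (le_of_eq ?_)
  congr 1
  rw [mul_pow, exp_sq]; ring

lemma prof_bound (ρ : ℝ) (n : ℕ) (s : ℝ) : prof ρ n s ^ 2 ≤ Real.exp (-ρ * s) := by
  unfold prof
  rw [mul_pow, exp_sq]
  have h1 := Real.smoothTransition.le_one (2 - s / ((n : ℝ) + 1))
  have h0 := Real.smoothTransition.nonneg (2 - s / ((n : ℝ) + 1))
  have : Real.smoothTransition (2 - s / ((n : ℝ) + 1)) ^ 2 ≤ 1 := pow_le_one₀ h0 h1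
  exact mul_le_of_le_one_left (Real.exp_pos _).le this

lemma prof'_bound {ρ : ℝ} (hρ : 0 < ρ) : ∃ K : ℝ, 0 ≤ K ∧ ∀ n s, prof' ρ n s ^ 2 ≤ K * Real.exp (-ρ * s) := by
  obtain ⟨M, hM, hb⟩ := trans_deriv_bound
  refine ⟨(M + ρ / 2) ^ 2, by positivity, fun n s => ?_⟩
  unfold prof'
  rw [mul_pow, exp_sq]
  refine mul_le_mul_of_nonneg_right ?_ (Real.exp_pos _).le
  apply sq_le_sq'
  all_goals
    have h1 := Real.smoothTransition.le_one (2 - s / ((n : ℝ) + 1))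
    have h0 := Real.smoothTransition.nonneg (2 - s / ((n : ℝ) + 1))
    have hd : |deriv Real.smoothTransition (2 - s / ((n : ℝ) + 1)) / ((n : ℝ) + 1)| ≤ M := by
      have hn : (1 : ℝ) ≤ n + 1 := by linarith [Nat.cast_nonneg (α := ℝ) n]
      rw [abs_div, abs_of_pos (by linarith : (0 : ℝ) < n + 1)]
      exact (div_le_self (abs_nonneg _) hn).trans (hb _)
    have := abs_le.1 hd
    nlinarith [this.1, this.2]

lemma gauss_integrable {c : ℝ} (hc : 0 < c) :
    Integrable (fun x : ℝ × ℝ => Real.exp (-c * (x.1 ^ 2 + x.2 ^ 2))) := by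
  have := (integrable_exp_neg_mul_sq hc).mul_prod (integrable_exp_neg_mul_sq hc)
  rw [← Measure.volume_eq_prod] at this
  refine this.congr (Eventually.of_forall fun x => ?_)
  simp only
  rw [← Real.exp_add]; congr 1; ring

lemma sq_exp_le {ρ s : ℝ} (hρ : 0 < ρ) : s * Real.exp (-ρ * s) ≤ 2 / ρ * Real.exp (-(ρ / 2) * s) := by
  have h := Real.add_one_le_exp (ρ / 2 * s)
  have h1 : s ≤ 2 / ρ * Real.exp (ρ / 2 * s) := by
    rw [div_mul_eq_mul_div, le_div_iff₀ hρ]; linarith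
  calc s * Real.exp (-ρ * s) ≤ 2 / ρ * Real.exp (ρ / 2 * s) * Real.exp (-ρ * s) := by gcongr
    _ = _ := by rw [mul_assoc, ← Real.exp_add]; congr 2; ring

lemma norm_lim {α ρ : ℝ} (hα : α ∈ Set.Ioo 0 π) (hρ : 0 < ρ) :
    Tendsto (fun n => norm2D (sector α) (tf ρ n)) atTop (nhds (α / (2 * ρ))) := by
  have e : ∫ x in sector α, Real.exp (-ρ * (x.1 ^ 2 + x.2 ^ 2)) = α / (2 * ρ) := by
    rw [polarS hα _ (fun r => Real.exp (-ρ * r ^ 2)) (fun _ => 1), radial1 hρ]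
    · simp; field_simp
    · intro r θ hr
      simp only
      rw [mul_one]; congr 2
      linear_combination r ^ 2 * Real.sin_sq_add_cos_sq θ
  rw [← e]
  unfold norm2D
  refine tendsto_integral_of_dominated_convergence
    (fun x : ℝ × ℝ => Real.exp (-ρ * (x.1 ^ 2 + x.2 ^ 2))) ?_ ?_ ?_ ?_
  · exact fun n => ((tf_Cc ρ n).1.continuous.norm.pow 2).aestronglyMeasurable
  · exact (gauss_integrable hρ).integrableOn
  · refine fun n => Eventually.of_forall fun x => ?_
    rw [tf_norm, Real.norm_of_nonneg (sq_nonneg _)]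
    exact prof_bound _ _ _
  · refine Eventually.of_forall fun x => ?_
    simp only [tf_norm]
    exact prof_tendsto _ _

lemma energy_lim {α ρ : ℝ} (b1 b2 b3 : ℝ) (hρ : 0 < ρ) :
    Tendsto (fun n => energy2D (sector α) b1 b2 b3 0 (tf ρ n)) atTop
      (nhds (∫ x in sector α, (ρ ^ 2 * (x.1 ^ 2 + x.2 ^ 2) + b3 ^ 2 * x.2 ^ 2
        + (x.1 * b2 - x.2 * b1) ^ 2) * Real.exp (-ρ * (x.1 ^ 2 + x.2 ^ 2)))) := by
  obtain ⟨K, hK, hb⟩ := prof'_bound hρ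
  simp only [energy2D_eq]
  refine tendsto_integral_of_dominated_convergence
    (fun x : ℝ × ℝ => (4 * K + b3 ^ 2 + (b1 ^ 2 + b2 ^ 2)) * (2 / ρ) *
      Real.exp (-(ρ / 2) * (x.1 ^ 2 + x.2 ^ 2))) ?_ ?_ ?_ ?_
  · exact fun n => ((dens_integrable b1 b2 b3 0 (tf_Cc ρ n)).integrableOn).aestronglyMeasurable
  · exact ((gauss_integrable (by linarith : 0 < ρ / 2)).const_mul _).integrableOn
  · refine fun n => Eventually.of_forall fun x => ?_
    rw [Real.norm_of_nonneg (dens_nonneg _ _ _ _ _ _), tf_dens]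
    have h1 := hb n (x.1 ^ 2 + x.2 ^ 2)
    have h2 := prof_bound ρ n (x.1 ^ 2 + x.2 ^ 2)
    have h3 := sq_exp_le (s := x.1 ^ 2 + x.2 ^ 2) hρ
    have h4 : b3 ^ 2 * x.2 ^ 2 + (x.1 * b2 - x.2 * b1) ^ 2 ≤
        (b3 ^ 2 + (b1 ^ 2 + b2 ^ 2)) * (x.1 ^ 2 + x.2 ^ 2) := by
      nlinarith [mul_nonneg (sq_nonneg b3) (sq_nonneg x.1), sq_nonneg (x.1 * b1 + x.2 * b2)]
    set s := x.1 ^ 2 + x.2 ^ 2 with hs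
    have hs0 : 0 ≤ s := by positivity
    calc _ ≤ 4 * s * (K * Real.exp (-ρ * s)) +
          (b3 ^ 2 + (b1 ^ 2 + b2 ^ 2)) * s * Real.exp (-ρ * s) := by gcongr
      _ = (4 * K + b3 ^ 2 + (b1 ^ 2 + b2 ^ 2)) * (s * Real.exp (-ρ * s)) := by ring
      _ ≤ (4 * K + b3 ^ 2 + (b1 ^ 2 + b2 ^ 2)) * (2 / ρ * Real.exp (-(ρ / 2) * s)) := by gcongr
      _ = _ := by ring
  · refine Eventually.of_forall fun x => ?_
    simp only [tf_dens]
    have := ((prof'_tendsto ρ (x.1 ^ 2 + x.2 ^ 2)).const_mul (4 * (x.1 ^ 2 + x.2 ^ 2))).add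
      ((prof_tendsto ρ (x.1 ^ 2 + x.2 ^ 2)).const_mul (b3 ^ 2 * x.2 ^ 2 + (x.1 * b2 - x.2 * b1) ^ 2))
    refine this.trans (le_of_eq ?_)
    congr 1; ring

lemma energy_val {α ρ : ℝ} (hα : α ∈ Set.Ioo 0 π) (κ b : ℝ) (hρ : 0 < ρ) :
    ∫ x in sector α, (ρ ^ 2 * (x.1 ^ 2 + x.2 ^ 2) + b ^ 2 * x.2 ^ 2
        + (x.1 * (κ * Real.sin (α / 2)) - x.2 * (κ * Real.cos (α / 2))) ^ 2)
          * Real.exp (-ρ * (x.1 ^ 2 + x.2 ^ 2))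
      ≤ 1 / (2 * ρ ^ 2) * (ρ ^ 2 * α + b ^ 2 * (α ^ 3 / 12) + κ ^ 2 * (α ^ 3 / 3)) := by
  rw [polarS hα _ (fun r => r ^ 2 * Real.exp (-ρ * r ^ 2))
    (fun θ => ρ ^ 2 + b ^ 2 * Real.sin θ ^ 2 + κ ^ 2 * Real.sin (α / 2 - θ) ^ 2), radial3 hρ]
  · refine mul_le_mul_of_nonneg_left ?_ (by positivity)
    have hval : ∫ θ in (-(α / 2))..(α / 2), (ρ ^ 2 + b ^ 2 * θ ^ 2 + κ ^ 2 * (α / 2 - θ) ^ 2) =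
        ρ ^ 2 * α + b ^ 2 * (α ^ 3 / 12) + κ ^ 2 * (α ^ 3 / 3) := by
      have hd : ∀ θ ∈ uIcc (-(α / 2)) (α / 2), HasDerivAt (fun θ : ℝ => ρ ^ 2 * θ + b ^ 2 * (θ ^ 3 / 3)
          - κ ^ 2 * ((α / 2 - θ) ^ 3 / 3)) (ρ ^ 2 + b ^ 2 * θ ^ 2 + κ ^ 2 * (α / 2 - θ) ^ 2) θ := by
        intro θ _
        have a1 := (hasDerivAt_id θ).const_mul (ρ ^ 2)
        have a2 := ((hasDerivAt_pow 3 θ).div_const 3).const_mul (b ^ 2)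
        have a3 := ((((hasDerivAt_id θ).const_sub (α / 2)).pow 3).div_const 3).const_mul (κ ^ 2)
        refine ((a1.add a2).sub a3).congr_deriv ?_
        simp; ring
      rw [intervalIntegral.integral_eq_sub_of_hasDerivAt hd (Continuous.intervalIntegrable (by fun_prop) _ _)]
      ring
    rw [← hval]
    refine intervalIntegral.integral_mono_on (by linarith [hα.1])
      (Continuous.intervalIntegrable (by fun_prop) _ _) (Continuous.intervalIntegrable (by fun_prop) _ _) ?_
    intro θ _
    have k : ∀ y : ℝ, Real.sin y ^ 2 ≤ y ^ 2 := fun y => sq_le_sq.2 Real.abs_sin_le_abs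
    have k1 := k θ
    have k2 := k (α / 2 - θ)
    gcongr
  · intro r θ hr
    simp only
    have hsc := Real.sin_sq_add_cos_sq θ
    have e : (r * Real.cos θ) ^ 2 + (r * Real.sin θ) ^ 2 = r ^ 2 := by linear_combination r ^ 2 * hsc
    rw [e, Real.sin_sub]
    ring

lemma bandFn_le (α γ : ℝ) (hα : α ∈ Set.Ioo 0 π) :
    bandFn α (Real.sin γ * Real.cos (α / 2)) (Real.sin γ * Real.sin (α / 2)) (Real.cos γ) 0 ≤
      α * (1 / Real.sqrt 3 + Real.sqrt 3 / 2 * Real.sin γ ^ 2) := by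
  have h3 : 0 < Real.sqrt 3 := by positivity
  have h33 : Real.sqrt 3 ^ 2 = 3 := Real.sq_sqrt (by norm_num)
  set κ := Real.sin γ with hκ
  set b := Real.cos γ with hb
  have hbk : b ^ 2 = 1 - κ ^ 2 := by rw [hb, hκ]; linarith [Real.sin_sq_add_cos_sq γ]
  have hα0 := hα.1
  set ρ := α * (1 / Real.sqrt 3 + Real.sqrt 3 / 2 * κ ^ 2) / 2 with hρd
  have hρ : 0 < ρ := by positivity
  have hkey : α ^ 2 * (1 + 3 * κ ^ 2) / 12 ≤ ρ ^ 2 := by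
    have : ρ ^ 2 = α ^ 2 * (1 + 3 / 2 * κ ^ 2) ^ 2 / 12 := by
      rw [hρd]
      have : 1 / Real.sqrt 3 + Real.sqrt 3 / 2 * κ ^ 2 = (1 + 3 / 2 * κ ^ 2) / Real.sqrt 3 := by
        field_simp; rw [h33]; ring
      rw [this, div_pow, mul_pow, div_pow, h33]; ring
    rw [this]
    have : 1 + 3 * κ ^ 2 ≤ (1 + 3 / 2 * κ ^ 2) ^ 2 := by nlinarith [sq_nonneg (κ ^ 2)]
    gcongr
  have hNpos : 0 < α / (2 * ρ) := by positivity
  have hlim := (energy_lim (α := α) (κ * Real.cos (α / 2)) (κ * Real.sin (α / 2)) b hρ).div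
    (norm_lim hα hρ) hNpos.ne'
  have hle := ge_of_tendsto' hlim (b := bandFn α (κ * Real.cos (α / 2)) (κ * Real.sin (α / 2)) b 0) ?_
  · refine hle.trans ?_
    rw [div_le_iff₀ hNpos]
    refine (energy_val hα κ b hρ).trans ?_
    have e1 : α * (1 / Real.sqrt 3 + Real.sqrt 3 / 2 * κ ^ 2) = 2 * ρ := by rw [hρd]; ring
    have e2 : 2 * ρ * (α / (2 * ρ)) = 1 / (2 * ρ ^ 2) * (2 * α * ρ ^ 2) := by field_simp
    rw [e1, e2]
    refine mul_le_mul_of_nonneg_left ?_ (by positivity)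
    rw [hbk]
    nlinarith [mul_le_mul_of_nonneg_left hkey hα0.le]
  · intro n
    refine csInf_le ⟨0, ?_⟩ ⟨tf ρ n, (tf_Cc ρ n).1, (tf_Cc ρ n).2, norm2D_pos hα (tf_Cc ρ n) ?_, rfl⟩
    · rintro r ⟨w, -, -, h, rfl⟩
      exact div_nonneg (integral_nonneg fun x => dens_nonneg _ _ _ _ _ _) h.le
    · have hn : (1 : ℝ) ≤ n + 1 := by linarith [Nat.cast_nonneg (α := ℝ) n]
      have : (1 : ℝ) ≤ 2 - 1 / ((n : ℝ) + 1) := by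
        have : 1 / ((n : ℝ) + 1) ≤ 1 := by rw [div_le_one (by linarith)]; exact hn
        linarith
      unfold tf prof
      have e : ((1 : ℝ), (0 : ℝ)).1 ^ 2 + ((1 : ℝ), (0 : ℝ)).2 ^ 2 = 1 := by norm_num
      rw [e, Real.smoothTransition.one_of_one_le this, one_mul]
      exact_mod_cast (Real.exp_pos _).ne'

lemma bandFn_nonneg (α b1 b2 b3 τ : ℝ) : 0 ≤ bandFn α b1 b2 b3 τ := by
  refine Real.sInf_nonneg ?_
  rintro r ⟨w, -, -, h, rfl⟩
  exact div_nonneg (integral_nonneg fun x => dens_nonneg _ _ _ _ _ _) h.le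

end MagWedge

open MagWedge in
/-- if `α(1/√3 + (√3/2)sin²γ) < Θ₀`, any minimizing `τ*` of the band function
gives a value strictly below the bottom of the essential spectrum (hence a discrete
eigenvalue). -/
theorem bandFn_min_lt_sEss (α γ : ℝ) (hα : α ∈ Set.Ioo 0 π) (hγ : γ ∈ Set.Icc 0 (π / 2))
    (hsmall : α * (1 / Real.sqrt 3 + Real.sqrt 3 / 2 * Real.sin γ ^ 2) < Theta0) :
    ∀ τs : ℝ,
      bandFn α (Real.sin γ * Real.cos (α / 2)) (Real.sin γ * Real.sin (α / 2)) (Real.cos γ) τs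
        = (⨅ τ : ℝ, bandFn α
            (Real.sin γ * Real.cos (α / 2)) (Real.sin γ * Real.sin (α / 2)) (Real.cos γ) τ) →
      bandFn α (Real.sin γ * Real.cos (α / 2)) (Real.sin γ * Real.sin (α / 2)) (Real.cos γ) τs
        < sEss α (Real.sin γ * Real.cos (α / 2)) (Real.sin γ * Real.sin (α / 2)) (Real.cos γ) τs := by
  intro τs hτ
  have h1 : bandFn α (Real.sin γ * Real.cos (α / 2)) (Real.sin γ * Real.sin (α / 2)) (Real.cos γ) τs
      ≤ bandFn α (Real.sin γ * Real.cos (α / 2)) (Real.sin γ * Real.sin (α / 2)) (Real.cos γ) 0 := by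
    rw [hτ]
    refine ciInf_le ⟨0, ?_⟩ 0
    rintro r ⟨τ, rfl⟩
    exact bandFn_nonneg _ _ _ _ _
  have h2 := bandFn_le α γ hα
  have h3 := sEss_ge α γ τs hα hγ (ε := (Theta0 - α * (1 / Real.sqrt 3 + Real.sqrt 3 / 2 * Real.sin γ ^ 2)) / 2)
    (by linarith)
  linarith
end
end

section
/- For α ∈ (0,π/2] and τ ∈ ℝ, let s(α,τ) be the infimum over smooth compactly supported u : ℝ² → ℂ with ∫_{S_α}|u|² > 0 of (∫_{S_α} |∇u|² + (x₁·sin(α/2) − x₂·cos(α/2) − τ)²·|u|² dx)/(∫_{S_α}|u|² dx). Then for every fixed τ ∈ ℝ, the map α ↦ s(α,τ) is non-decreasing on (0,π/2]. -/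
open Real MeasureTheory Set Filter

noncomputable section

namespace MagWedge

/-- closed quadrant -/
def quad : Set (ℝ × ℝ) := Ici 0 ×ˢ Ici 0

/-- test functions -/
def IsTest (u : ℝ × ℝ → ℂ) : Prop := ContDiff ℝ (⊤ : ℕ∞) u ∧ HasCompactSupport u

/-- form on the quadrant -/
def Qform (m τ : ℝ) (v : ℝ × ℝ → ℂ) : ℝ :=
  ∫ x in quad, (m * ‖fderiv ℝ v x (1, 0) + fderiv ℝ v x (0, 1)‖ ^ 2
      + (1 - m) * ‖fderiv ℝ v x (1, 0) - fderiv ℝ v x (0, 1)‖ ^ 2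
      + (x.2 - τ) ^ 2 * ‖v x‖ ^ 2)

/-- lower bound property -/
def LB (m τ l : ℝ) : Prop := ∀ v, IsTest v → l * norm2D quad v ≤ Qform m τ v

/-- parametrization of the sector by the quadrant -/
def T (S C : ℝ) (hS : 0 < S) (hC : 0 < C) : (ℝ × ℝ) ≃L[ℝ] (ℝ × ℝ) :=
  LinearEquiv.toContinuousLinearEquiv
  { toFun := fun p => ((p.1 + p.2) / (2 * S), (p.1 - p.2) / (2 * C))
    invFun := fun x => (x.1 * S + x.2 * C, x.1 * S - x.2 * C)
    map_add' := by intro x y; ext <;> simp <;> ring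
    map_smul' := by intro c x; ext <;> simp <;> ring
    left_inv := by intro x; ext <;> simp <;> field_simp <;> ring
    right_inv := by intro x; ext <;> simp <;> field_simp <;> ring }

lemma T_apply (S C : ℝ) (hS : 0 < S) (hC : 0 < C) (p : ℝ × ℝ) :
    T S C hS hC p = ((p.1 + p.2) / (2 * S), (p.1 - p.2) / (2 * C)) := rfl

lemma T_symm_apply (S C : ℝ) (hS : 0 < S) (hC : 0 < C) (x : ℝ × ℝ) :
    (T S C hS hC).symm x = (x.1 * S + x.2 * C, x.1 * S - x.2 * C) := rfl

lemma sector_eq (α : ℝ) (hS : 0 < sin (α / 2)) (hC : 0 < cos (α / 2)) :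
    sector α = T _ _ hS hC '' quad := by
  ext x
  have : x ∈ T _ _ hS hC '' quad ↔ (T _ _ hS hC).symm x ∈ quad := by
    constructor
    · rintro ⟨y, hy, rfl⟩; simpa using hy
    · intro h; exact ⟨_, h, by simp⟩
  rw [this, T_symm_apply]
  simp only [sector, quad, mem_setOf_eq, mem_prod, mem_Ici, tan_eq_sin_div_cos]
  rw [← mul_div_assoc, le_div_iff₀ hC, show |x.2| * cos (α / 2) = |x.2 * cos (α / 2)| by
    rw [abs_mul, abs_of_pos hC], abs_le]
  constructor <;> rintro ⟨h1, h2⟩ <;> constructor <;> linarith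


lemma quad_meas : MeasurableSet quad := measurableSet_Ici.prod measurableSet_Ici

lemma integral_sector (α : ℝ) (hS : 0 < sin (α / 2)) (hC : 0 < cos (α / 2)) :
    ∃ J : ℝ, 0 < J ∧ ∀ g : ℝ × ℝ → ℝ,
      ∫ x in sector α, g x = J * ∫ x in quad, g (T _ _ hS hC x) := by
  refine ⟨|((T _ _ hS hC : (ℝ × ℝ) →L[ℝ] (ℝ × ℝ))).det|, ?_, ?_⟩
  · rw [abs_pos]
    exact (LinearEquiv.isUnit_det' (T _ _ hS hC).toLinearEquiv).ne_zero
  · intro g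
    rw [sector_eq α hS hC, integral_image_eq_integral_abs_det_fderiv_smul volume quad_meas
      (fun x _ => (T _ _ hS hC).hasFDerivAt.hasFDerivWithinAt) (T _ _ hS hC).injective.injOn]
    simp only [smul_eq_mul]
    rw [integral_const_mul]

lemma test_comp (e : (ℝ × ℝ) ≃L[ℝ] (ℝ × ℝ)) {u : ℝ × ℝ → ℂ} (hu : IsTest u) : IsTest (u ∘ e) :=
  ⟨hu.1.comp e.contDiff, hu.2.comp_homeomorph e.toHomeomorph⟩

lemma energy_eq (α τ : ℝ) (hS : 0 < sin (α / 2)) (hC : 0 < cos (α / 2)) :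
    ∃ J : ℝ, 0 < J ∧ ∀ u, IsTest u →
      norm2D (sector α) u = J * norm2D quad (u ∘ T _ _ hS hC) ∧
      energy2D (sector α) (cos (α / 2)) (sin (α / 2)) 0 τ u
        = J * Qform (sin (α / 2) ^ 2) τ (u ∘ T _ _ hS hC) := by
  obtain ⟨J, hJ, h⟩ := integral_sector α hS hC
  refine ⟨J, hJ, fun u hu => ⟨h _, ?_⟩⟩
  rw [energy2D, h, Qform]
  congr 2
  ext x
  have hd : fderiv ℝ (u ∘ T _ _ hS hC) x
      = (fderiv ℝ u (T _ _ hS hC x)).comp (T _ _ hS hC : (ℝ × ℝ) →L[ℝ] (ℝ × ℝ)) :=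
    ((hu.1.differentiable (by simp) _).hasFDerivAt.comp x (T _ _ hS hC).hasFDerivAt).fderiv
  set D := fderiv ℝ u (T _ _ hS hC x) with hD
  have e (a b : ℝ) : D (a, b) = a • D (1, 0) + b • D (0, 1) := by
    rw [← map_smul, ← map_smul, ← map_add]; simp
  have h1 : fderiv ℝ (u ∘ T _ _ hS hC) x (1, 0) + fderiv ℝ (u ∘ T _ _ hS hC) x (0, 1)
      = (1 / sin (α / 2)) • D (1, 0) := by
    rw [hd]
    simp only [ContinuousLinearMap.comp_apply, ContinuousLinearEquiv.coe_coe]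
    rw [← map_add, ← map_smul]
    congr 1
    simp only [T_apply]; ext <;> simp <;> field_simp <;> ring
  have h2 : fderiv ℝ (u ∘ T _ _ hS hC) x (1, 0) - fderiv ℝ (u ∘ T _ _ hS hC) x (0, 1)
      = (1 / cos (α / 2)) • D (0, 1) := by
    rw [hd]
    simp only [ContinuousLinearMap.comp_apply, ContinuousLinearEquiv.coe_coe]
    rw [← map_sub, ← map_smul]
    congr 1
    simp only [T_apply]; ext <;> simp <;> field_simp <;> ring
  rw [h1, h2]
  have h3 : 1 - sin (α / 2) ^ 2 = cos (α / 2) ^ 2 := by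
    rw [← Real.sin_sq_add_cos_sq (α / 2)]; ring
  rw [h3]
  simp only [norm_smul, mul_pow, Function.comp, mul_zero, Complex.ofReal_zero, zero_mul, add_zero,
    norm_mul, norm_neg, Complex.norm_I, one_pow, one_mul, Real.norm_eq_abs, sq_abs]
  have h4 : (T _ _ hS hC x).1 * sin (α / 2) - (T _ _ hS hC x).2 * cos (α / 2) = x.2 := by
    rw [T_apply]; field_simp; ring
  rw [h4]
  field_simp

lemma continuous_grad {v : ℝ × ℝ → ℂ} (hv : IsTest v) (p : ℝ × ℝ) :
    Continuous fun x => fderiv ℝ v x p :=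
  (hv.1.continuous_fderiv (by simp)).clm_apply continuous_const

lemma cs_grad {v : ℝ × ℝ → ℂ} (hv : IsTest v) (p : ℝ × ℝ) :
    HasCompactSupport fun x => fderiv ℝ v x p := hv.2.fderiv_apply ℝ p

lemma int_sq {f : ℝ × ℝ → ℂ} (hf : Continuous f) (hc : HasCompactSupport f)
    {w : ℝ × ℝ → ℝ} (hw : Continuous w) : Integrable fun x => w x * ‖f x‖ ^ 2 := by
  refine Continuous.integrable_of_hasCompactSupport (by fun_prop) ?_
  refine hc.mono fun x hx => ?_
  simp only [Function.mem_support, ne_eq] at hx ⊢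
  contrapose! hx
  simp [hx]

lemma Qform_eq (m τ : ℝ) (v : ℝ × ℝ → ℂ) (hv : IsTest v) :
    Qform m τ v = m * (∫ x in quad, ‖fderiv ℝ v x (1, 0) + fderiv ℝ v x (0, 1)‖ ^ 2)
      + (1 - m) * (∫ x in quad, ‖fderiv ℝ v x (1, 0) - fderiv ℝ v x (0, 1)‖ ^ 2)
      + ∫ x in quad, (x.2 - τ) ^ 2 * ‖v x‖ ^ 2 := by
  have i1 (m : ℝ) := int_sq (w := fun _ => m)
    ((continuous_grad hv (1, 0)).add (continuous_grad hv (0, 1)))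
    ((cs_grad hv (1, 0)).add (cs_grad hv (0, 1))) continuous_const
  have i2 (m : ℝ) := int_sq (w := fun _ => m)
    ((continuous_grad hv (1, 0)).sub (continuous_grad hv (0, 1)))
    ((cs_grad hv (1, 0)).sub (cs_grad hv (0, 1))) continuous_const
  have i3 := int_sq (w := fun x => (x.2 - τ) ^ 2) hv.1.continuous hv.2 (by fun_prop)
  rw [Qform, integral_add, integral_add, integral_const_mul, integral_const_mul]
  · exact (i1 m).integrableOn
  · exact (i2 (1 - m)).integrableOn
  · exact ((i1 m).add (i2 (1 - m))).integrableOn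
  · exact i3.integrableOn

lemma LB_interp {m0 m τ l : ℝ} (h0 : LB m0 τ l) (h1 : LB (1 / 2) τ l) (hm : m0 ≤ m)
    (hm' : m ≤ 1 / 2) : LB m τ l := by
  intro v hv
  have a := h0 v hv
  have b := h1 v hv
  rw [Qform_eq _ _ _ hv] at a b ⊢
  rcases eq_or_lt_of_le hm' with rfl | hlt
  · exact b
  set A := ∫ x in quad, ‖fderiv ℝ v x (1, 0) + fderiv ℝ v x (0, 1)‖ ^ 2
  set B := ∫ x in quad, ‖fderiv ℝ v x (1, 0) - fderiv ℝ v x (0, 1)‖ ^ 2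
  set D := ∫ x in quad, (x.2 - τ) ^ 2 * ‖v x‖ ^ 2
  set N := norm2D quad v
  have hp : 0 < 1 / 2 - m0 := by linarith
  have := mul_le_mul_of_nonneg_left a (sub_nonneg.2 hm')
  have := mul_le_mul_of_nonneg_left b (sub_nonneg.2 hm)
  refine le_of_mul_le_mul_left ?_ hp
  nlinarith

lemma hd_prod {χ : ℝ → ℝ} {φ : ℝ → ℂ} (hχ : ContDiff ℝ (⊤ : ℕ∞) χ) (hφ : ContDiff ℝ (⊤ : ℕ∞) φ)
    (x : ℝ × ℝ) :
    fderiv ℝ (fun x : ℝ × ℝ => (χ x.1 : ℂ) * φ x.2) x (1, 0) = deriv χ x.1 * φ x.2 ∧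
    fderiv ℝ (fun x : ℝ × ℝ => (χ x.1 : ℂ) * φ x.2) x (0, 1) = χ x.1 * deriv φ x.2 := by
  have a : HasFDerivAt (fun x : ℝ × ℝ => (χ x.1 : ℂ)) _ x :=
    ((hχ.differentiable (by simp) x.1).hasDerivAt.ofReal_comp.hasFDerivAt).comp x hasFDerivAt_fst
  have b : HasFDerivAt (fun x : ℝ × ℝ => φ x.2) _ x :=
    ((hφ.differentiable (by simp) x.2).hasDerivAt.hasFDerivAt).comp x hasFDerivAt_snd
  erw [(a.mul b).fderiv]
  constructor <;> simp [mul_comm]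

lemma test_prod {χ : ℝ → ℝ} {φ : ℝ → ℂ} (hχ : ContDiff ℝ (⊤ : ℕ∞) χ) (hφ : ContDiff ℝ (⊤ : ℕ∞) φ)
    (cχ : HasCompactSupport χ) (cφ : HasCompactSupport φ) :
    IsTest (fun x : ℝ × ℝ => (χ x.1 : ℂ) * φ x.2) := by
  constructor
  · exact (Complex.ofRealCLM.contDiff.comp (hχ.comp contDiff_fst)).mul (hφ.comp contDiff_snd)
  · refine HasCompactSupport.intro (cχ.isCompact.prod cφ.isCompact) ?_
    intro x hx
    simp only [mem_prod, not_and_or] at hx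
    rcases hx with h | h
    · simp [image_eq_zero_of_notMem_tsupport h]
    · simp [image_eq_zero_of_notMem_tsupport h]

lemma int1 {f : ℝ → ℝ} (hf : Continuous f) (hc : HasCompactSupport f) :
    IntegrableOn f (Ici 0) := (hf.integrable_of_hasCompactSupport hc).integrableOn

lemma int_quad_mul (f g : ℝ → ℝ) :
    ∫ x in quad, f x.1 * g x.2 = (∫ s in Ici 0, f s) * ∫ t in Ici 0, g t := by
  rw [quad, Measure.volume_eq_prod, setIntegral_prod_mul]

lemma one_dim_pre {m τ l : ℝ} (h : LB m τ l) {χ : ℝ → ℝ} {φ : ℝ → ℂ} 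
    (hχ : ContDiff ℝ (⊤ : ℕ∞) χ) (hφ : ContDiff ℝ (⊤ : ℕ∞) φ)
    (cχ : HasCompactSupport χ) (cφ : HasCompactSupport φ) :
    l * ((∫ s in Ici 0, χ s ^ 2) * ∫ t in Ici 0, ‖φ t‖ ^ 2) ≤
      (∫ s in Ici 0, (deriv χ s) ^ 2) * (∫ t in Ici 0, ‖φ t‖ ^ 2)
      + (∫ s in Ici 0, χ s ^ 2) * (∫ t in Ici 0, (‖deriv φ t‖ ^ 2 + (t - τ) ^ 2 * ‖φ t‖ ^ 2))
      + (∫ s in Ici 0, χ s * deriv χ s) *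
        (∫ t in Ici 0, (2 * (2 * m - 1)) * inner ℝ (φ t) (deriv φ t)) := by
  have key := h _ (test_prod hχ hφ cχ cφ)
  have c0 := hχ.continuous
  have c1 : Continuous (deriv χ) := hχ.continuous_deriv (by simp)
  have d0 := hφ.continuous
  have d1 : Continuous (deriv φ) := hφ.continuous_deriv (by simp)
  have cs (f : ℝ → ℝ) (hf : ∀ t, φ t = 0 → deriv φ t = 0 → f t = 0) : HasCompactSupport f := by
    refine HasCompactSupport.intro cφ.isCompact fun t ht => hf t ?_ ?_
    · exact image_eq_zero_of_notMem_tsupport ht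
    · exact image_eq_zero_of_notMem_tsupport fun h' => ht (tsupport_deriv_subset h')
  have cs' (f : ℝ → ℝ) (hf : ∀ t, χ t = 0 → deriv χ t = 0 → f t = 0) : HasCompactSupport f := by
    refine HasCompactSupport.intro cχ.isCompact fun t ht => hf t ?_ ?_
    · exact image_eq_zero_of_notMem_tsupport ht
    · exact image_eq_zero_of_notMem_tsupport fun h' => ht (tsupport_deriv_subset h')
  have iprod {f g : ℝ → ℝ} (hf : IntegrableOn f (Ici 0)) (hg : IntegrableOn g (Ici 0)) :
      Integrable (fun x : ℝ × ℝ => f x.1 * g x.2) (volume.restrict quad) := by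
    rw [quad, Measure.volume_eq_prod, ← Measure.prod_restrict]
    exact Integrable.mul_prod hf hg
  have i1 := iprod (f := fun s => (deriv χ s) ^ 2) (g := fun t => ‖φ t‖ ^ 2)
    (int1 (by fun_prop) (cs' _ (by simp +contextual)))
    (int1 (by fun_prop) (cs _ (by simp +contextual)))
  have i2 := iprod (f := fun s => χ s ^ 2)
    (g := fun t => ‖deriv φ t‖ ^ 2 + (t - τ) ^ 2 * ‖φ t‖ ^ 2)
    (int1 (by fun_prop) (cs' _ (by simp +contextual)))
    (int1 (by fun_prop) (cs _ (by simp +contextual)))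
  have i3 := iprod (f := fun s => χ s * deriv χ s)
    (g := fun t => (2 * (2 * m - 1)) * inner ℝ (φ t) (deriv φ t))
    (int1 (by fun_prop) (cs' _ (by simp +contextual)))
    (int1 (by fun_prop) (cs _ (by simp +contextual)))
  rw [← int_quad_mul, ← int_quad_mul, ← int_quad_mul, ← int_quad_mul,
    ← integral_add i1 i2]
  have i12 := i1.add i2
  simp only [Pi.add_def] at i12
  rw [← integral_add i12 i3]
  convert key using 1
  · rw [norm2D]; simp only [norm_mul, mul_pow, Complex.norm_real, Real.norm_eq_abs, sq_abs]
  · rw [Qform]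
    congr 1
    ext x
    rw [(hd_prod hχ hφ x).1, (hd_prod hχ hφ x).2]
    simp only [← Complex.real_smul]
    rw [norm_add_sq_real, norm_sub_sq_real]
    simp only [norm_smul, mul_pow, real_inner_smul_left, real_inner_smul_right,
      Real.norm_eq_abs, sq_abs]
    ring

lemma one_dim {m τ l : ℝ} (h : LB m τ l) {φ : ℝ → ℂ} (hφ : ContDiff ℝ (⊤ : ℕ∞) φ)
    (cφ : HasCompactSupport φ) :
    l * (∫ t in Ici 0, ‖φ t‖ ^ 2) ≤ ∫ t in Ici 0, (‖deriv φ t‖ ^ 2 + (t - τ) ^ 2 * ‖φ t‖ ^ 2) := by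
  let b : ContDiffBump (0 : ℝ) := ⟨1, 2, by norm_num, by norm_num⟩
  have hb : ContDiff ℝ (⊤ : ℕ∞) (b : ℝ → ℝ) := b.contDiff
  have cb : HasCompactSupport (b : ℝ → ℝ) := b.hasCompactSupport
  set N := ∫ t in Ici 0, ‖φ t‖ ^ 2
  set K := ∫ t in Ici 0, (‖deriv φ t‖ ^ 2 + (t - τ) ^ 2 * ‖φ t‖ ^ 2)
  set X := ∫ t in Ici 0, (2 * (2 * m - 1)) * inner ℝ (φ t) (deriv φ t)
  set A := ∫ s in Ici 0, b s ^ 2 with hA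
  set B := ∫ s in Ici 0, (deriv b s) ^ 2 with hB
  set D := ∫ s in Ici 0, b s * deriv b s with hD
  have Apos : 0 < A := by
    have hc : Continuous fun s => b s ^ 2 := by
      have := hb.continuous
      fun_prop
    have i : IntegrableOn (fun s => b s ^ 2) (Ici 0) := int1 hc
      (cb.mono fun s hs => by
        simp only [Function.mem_support, ne_eq] at hs ⊢
        contrapose! hs; simp [hs])
    have : ∫ s in Icc 0 1, b s ^ 2 = 1 := by
      rw [setIntegral_congr_fun (g := fun _ => (1 : ℝ)) measurableSet_Icc]
      · simp
      · intro s hs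
        have : b s = 1 := b.one_of_mem_closedBall (by
          simp only [Metric.mem_closedBall, dist_zero_right, Real.norm_eq_abs]
          exact abs_le.2 ⟨by linarith [hs.1], hs.2⟩)
        simp [this]
    have h2 := setIntegral_mono_set i (ae_of_all _ fun s => sq_nonneg (b s))
      (show Icc (0 : ℝ) 1 ⊆ Ici 0 from Icc_subset_Ici_self).eventuallyLE
    linarith
  have main : ∀ ε : ℝ, 0 < ε → l * (A * N) ≤ ε ^ 2 * (B * N) + A * K + ε * (D * X) := by
    intro ε hε
    have sc (g : ℝ → ℝ) : ∫ s in Ici 0, g (ε * s) = ε⁻¹ * ∫ s in Ici 0, g s := by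
      rw [integral_Ici_eq_integral_Ioi, integral_Ici_eq_integral_Ioi,
        integral_comp_mul_left_Ioi g 0 hε]
      simp
    have hd : ∀ s, deriv (fun s => b (ε * s)) s = ε * deriv b (ε * s) := by
      intro s
      have := deriv_comp_mul_left ε (b : ℝ → ℝ) s
      simpa using this
    have p := one_dim_pre h (χ := fun s => b (ε * s)) (hb.comp (contDiff_const.mul contDiff_id)) hφ
      (cb.comp_homeomorph (Homeomorph.mulLeft₀ ε hε.ne')) cφ
    simp only [hd] at p
    rw [sc (fun s => b s ^ 2), sc (fun s => (ε * deriv b s) ^ 2),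
      sc (fun s => b s * (ε * deriv b s))] at p
    have e1 : ∫ s in Ici 0, (ε * deriv b s) ^ 2 = ε ^ 2 * B := by
      rw [hB, ← integral_const_mul]; simp only [mul_pow]
    have e2 : ∫ s in Ici 0, b s * (ε * deriv b s) = ε * D := by
      rw [hD, ← integral_const_mul]; congr 1; ext s; ring
    rw [e1, e2] at p
    have p := mul_le_mul_of_nonneg_left p hε.le
    change ε * (l * (ε⁻¹ * A * N)) ≤ ε * (ε⁻¹ * (ε ^ 2 * B) * N + ε⁻¹ * A * K + ε⁻¹ * (ε * D) * X) at p
    field_simp at p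
    linarith
  have lim : Tendsto (fun ε : ℝ => ε ^ 2 * (B * N) + A * K + ε * (D * X)) (nhdsWithin 0 (Ioi 0))
      (nhds (A * K)) := by
    have : Continuous (fun ε : ℝ => ε ^ 2 * (B * N) + A * K + ε * (D * X)) := by fun_prop
    simpa using (this.tendsto 0).mono_left nhdsWithin_le_nhds
  have := ge_of_tendsto lim (eventually_nhdsWithin_of_forall fun ε hε => main ε hε)
  refine le_of_mul_le_mul_left ?_ Apos
  linarith

lemma LB_half {m τ l : ℝ} (h : LB m τ l) : LB (1 / 2) τ l := by
  intro v hv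
  have j1 := int_sq (w := fun _ => 1) (continuous_grad hv (1, 0)) (cs_grad hv (1, 0))
    continuous_const
  have j2 := int_sq (w := fun _ => 1) (continuous_grad hv (0, 1)) (cs_grad hv (0, 1))
    continuous_const
  have j3 := int_sq (w := fun x => (x.2 - τ) ^ 2) hv.1.continuous hv.2 (by fun_prop)
  have j4 := int_sq (w := fun _ => l) hv.1.continuous hv.2 continuous_const
  simp only [one_mul] at j1 j2
  have step : ∫ x in quad, l * ‖v x‖ ^ 2 ≤
      ∫ x in quad, (‖fderiv ℝ v x (0, 1)‖ ^ 2 + (x.2 - τ) ^ 2 * ‖v x‖ ^ 2) := by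
    have k1 := j4.integrableOn (s := quad)
    have k2 := (j2.add j3).integrableOn (s := quad)
    have hr : (volume : Measure (ℝ × ℝ)).restrict quad
        = (volume.restrict (Ici 0)).prod (volume.restrict (Ici 0)) := by
      rw [quad, Measure.volume_eq_prod, ← Measure.prod_restrict]
    rw [IntegrableOn, hr] at k1 k2
    simp only [Pi.add_def] at k2
    rw [hr, integral_prod _ k1, integral_prod _ k2]
    refine integral_mono k1.integral_prod_left k2.integral_prod_left fun s => ?_
    have c : ContDiff ℝ (⊤ : ℕ∞) fun t => v (s, t) := hv.1.comp (contDiff_const.prodMk contDiff_id)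
    have cc : HasCompactSupport fun t => v (s, t) := by
      refine HasCompactSupport.intro (hv.2.isCompact.image continuous_snd) fun t ht => ?_
      refine image_eq_zero_of_notMem_tsupport fun h' => ht ⟨(s, t), h', rfl⟩
    have o := one_dim h c cc
    have hd : ∀ t, deriv (fun t => v (s, t)) t = fderiv ℝ v (s, t) (0, 1) := by
      intro t
      have a := (hv.1.differentiable (by simp) (s, t)).hasFDerivAt
      have b : HasDerivAt (fun t : ℝ => (s, t)) ((0 : ℝ), (1 : ℝ)) t :=
        (hasDerivAt_const t s).prodMk (hasDerivAt_id t)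
      exact (a.comp_hasDerivAt t b).deriv
    simp only [hd] at o
    rw [← integral_const_mul] at o
    exact o
  rw [norm2D, ← integral_const_mul]
  refine step.trans ?_
  rw [Qform]
  have eq : ∀ x : ℝ × ℝ, (1 / 2 * ‖fderiv ℝ v x (1, 0) + fderiv ℝ v x (0, 1)‖ ^ 2
      + (1 - 1 / 2) * ‖fderiv ℝ v x (1, 0) - fderiv ℝ v x (0, 1)‖ ^ 2
      + (x.2 - τ) ^ 2 * ‖v x‖ ^ 2) = ‖fderiv ℝ v x (1, 0)‖ ^ 2 +
        (‖fderiv ℝ v x (0, 1)‖ ^ 2 + (x.2 - τ) ^ 2 * ‖v x‖ ^ 2) := by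
    intro x
    rw [norm_add_sq_real, norm_sub_sq_real]; ring
  simp only [eq]
  refine integral_mono (j2.add j3).integrableOn (j1.add (j2.add j3)).integrableOn fun x => ?_
  exact le_add_of_nonneg_left (sq_nonneg _)

lemma energy_nonneg (Ω : Set (ℝ × ℝ)) (b1 b2 b3 τ : ℝ) (u : ℝ × ℝ → ℂ) :
    0 ≤ energy2D Ω b1 b2 b3 τ u := integral_nonneg fun x => by positivity

lemma norm_nonneg' (Ω : Set (ℝ × ℝ)) (u : ℝ × ℝ → ℂ) :
    0 ≤ norm2D Ω u := integral_nonneg fun x => by positivity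

lemma LB_bandFn (α τ : ℝ) (hS : 0 < sin (α / 2)) (hC : 0 < cos (α / 2)) :
    LB (sin (α / 2) ^ 2) τ (bandFn α (cos (α / 2)) (sin (α / 2)) 0 τ) := by
  intro v hv
  obtain ⟨J, hJ, H⟩ := energy_eq α τ hS hC
  have hu := test_comp (T _ _ hS hC).symm hv
  obtain ⟨h1, h2⟩ := H _ hu
  have e : (v ∘ (T _ _ hS hC).symm) ∘ (T _ _ hS hC) = v := by ext x; simp
  rw [e] at h1 h2
  have q : 0 ≤ Qform (sin (α / 2) ^ 2) τ v := by
    have := energy_nonneg (sector α) (cos (α / 2)) (sin (α / 2)) 0 τ (v ∘ (T _ _ hS hC).symm)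
    rw [h2] at this
    exact nonneg_of_mul_nonneg_right this hJ
  rcases (norm_nonneg' quad v).eq_or_lt with h0 | h0
  · rw [← h0, mul_zero]; exact q
  rw [← le_div_iff₀ h0]
  refine csInf_le ⟨0, ?_⟩ ⟨_, hu.1, hu.2, ?_, ?_⟩
  · rintro r ⟨u, _, _, h, rfl⟩
    exact div_nonneg (energy_nonneg _ _ _ _ _ _) h.le
  · rw [h1]; positivity
  · rw [h1, h2, mul_div_mul_left _ _ hJ.ne']

lemma exists_test : ∃ v, IsTest v ∧ 0 < norm2D quad v := by
  let b : ContDiffBump (0 : ℝ × ℝ) := ⟨1, 2, by norm_num, by norm_num⟩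
  have ht : IsTest (fun x => (b x : ℂ)) :=
    ⟨Complex.ofRealCLM.contDiff.comp b.contDiff, b.hasCompactSupport.comp_left (g := fun r : ℝ => (r : ℂ)) (by simp)⟩
  refine ⟨_, ht, ?_⟩
  have i := (int_sq (w := fun _ => 1) ht.1.continuous ht.2 continuous_const)
  simp only [one_mul] at i
  have h2 := setIntegral_mono_set (i.integrableOn (s := quad)) (ae_of_all _ fun s => sq_nonneg _)
      (show Icc (0 : ℝ) 1 ×ˢ Icc (0 : ℝ) 1 ⊆ quad from
        prod_mono Icc_subset_Ici_self Icc_subset_Ici_self).eventuallyLE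
  have : ∫ s in Icc (0 : ℝ) 1 ×ˢ Icc (0 : ℝ) 1, ‖(b s : ℂ)‖ ^ 2 = 1 := by
    rw [setIntegral_congr_fun (g := fun _ => (1 : ℝ)) (measurableSet_Icc.prod measurableSet_Icc)]
    · rw [setIntegral_const, Measure.real, Measure.volume_eq_prod, Measure.prod_prod]
      simp
    · intro s hs
      have : b s = 1 := b.one_of_mem_closedBall (by
        simp only [Metric.mem_closedBall, dist_zero_right, Prod.norm_def, Real.norm_eq_abs]
        obtain ⟨⟨h1, h2⟩, h3, h4⟩ := hs
        exact max_le (abs_le.2 ⟨by linarith, h2⟩) (abs_le.2 ⟨by linarith, h4⟩))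
      simp [this]
  rw [this] at h2
  exact lt_of_lt_of_le one_pos h2

lemma le_bandFn (α τ l : ℝ) (hS : 0 < sin (α / 2)) (hC : 0 < cos (α / 2))
    (h : LB (sin (α / 2) ^ 2) τ l) : l ≤ bandFn α (cos (α / 2)) (sin (α / 2)) 0 τ := by
  obtain ⟨J, hJ, H⟩ := energy_eq α τ hS hC
  refine le_csInf ?_ ?_
  · obtain ⟨v, hv, hp⟩ := exists_test
    have hu := test_comp (T _ _ hS hC).symm hv
    obtain ⟨h1, -⟩ := H _ hu
    have e : (v ∘ (T _ _ hS hC).symm) ∘ (T _ _ hS hC) = v := by ext x; simp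
    rw [e] at h1
    exact ⟨_, _, hu.1, hu.2, by rw [h1]; positivity, rfl⟩
  · rintro r ⟨u, hu1, hu2, hp, rfl⟩
    obtain ⟨h1, h2⟩ := H u ⟨hu1, hu2⟩
    have := h _ (test_comp (T _ _ hS hC) ⟨hu1, hu2⟩)
    rw [le_div_iff₀ hp, h1, h2]
    have := mul_le_mul_of_nonneg_left this hJ.le
    linarith

end MagWedge

open MagWedge in
/-- for every `τ`, `α ↦ s(α,τ)` is non-decreasing on `(0, π/2]`
(field tangent to a face and normal to the edge, `b₃ = 0`). -/
theorem bandFn_monotone_normal_field (τ : ℝ) :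
    MonotoneOn (fun α : ℝ => bandFn α (Real.cos (α / 2)) (Real.sin (α / 2)) 0 τ)
      (Set.Ioc 0 (π / 2)) := by
  intro a ha b hb hab
  have hpi := Real.pi_pos
  have s (x : ℝ) (hx : x ∈ Set.Ioc 0 (π / 2)) : 0 < sin (x / 2) :=
    sin_pos_of_pos_of_lt_pi (by linarith [hx.1]) (by linarith [hx.2])
  have c (x : ℝ) (hx : x ∈ Set.Ioc 0 (π / 2)) : 0 < cos (x / 2) :=
    cos_pos_of_mem_Ioo ⟨by linarith [hx.1], by linarith [hx.2]⟩
  have h := LB_bandFn a τ (s a ha) (c a ha)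
  refine le_bandFn b τ _ (s b hb) (c b hb) (LB_interp h (LB_half h) ?_ ?_)
  · refine pow_le_pow_left₀ (s a ha).le ?_ 2
    exact sin_le_sin_of_le_of_le_pi_div_two (by linarith [ha.1]) (by linarith [hb.2]) (by linarith)
  · rw [Real.sin_sq_eq_half_sub]
    have : 0 ≤ cos (2 * (b / 2)) :=
      cos_nonneg_of_mem_Icc ⟨by linarith [hb.1], by linarith [hb.2]⟩
    linarith
end
end
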